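/- arXiv:2409.06849 — 3 statements merged into one kernel-verified Lean document; each statement's English description precedes it below -/
import Mathlib

section
/- For every integer d ≥ 3, the asymptotic critical exponent of the fixed point u_d of φ_d equals E*(u_d) = 1 + 1/(3 − Λ_d), where Λ_d is the unique real number in the open interval (2,3) satisfying Λ_d^{d−1}(Λ_d − 2)^2 = 1 (equivalently, Λ_d is the spectral radius of the incidence matrix of φ_d). -/
namespace RichRT

variable {A : Type*}

/-- The word `w` occurs in the sequence `u` at position `j`. -/
def OccursAt (w : List A) (u : ℕ → A) (j : ℕ) : Prop :=
  w = (List.range w.length).map fun t => u (j + t)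

/-- `w` is a factor of the infinite sequence `u`. -/
def IsFactorS (w : List A) (u : ℕ → A) : Prop :=
  ∃ j : ℕ, OccursAt w u j

/-- `u` is recurrent: every factor occurs infinitely often. -/
def Recurrent (u : ℕ → A) : Prop :=
  ∀ w : List A, IsFactorS w u → ∀ N : ℕ, ∃ j, N ≤ j ∧ OccursAt w u j

/-- The number of distinct palindromic factors of a finite word. -/
noncomputable def palCount (w : List A) : ℕ :=
  Set.ncard {p : List A | p <:+: w ∧ p.reverse = p}

/-- A finite word of length `n` is rich if it has exactly `n+1` palindromic factors. -/
def RichWord (w : List A) : Prop := palCount w = w.length + 1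

/-- A sequence is rich if all its factors are rich. -/
def RichSeq (u : ℕ → A) : Prop := ∀ w : List A, IsFactorS w u → RichWord w

/-- The prefix of length `k` of the periodic sequence `vvv⋯`. -/
def powPref (v : List A) (k : ℕ) : List A := ((List.replicate k v).flatten).take k

/-- The set of exponents `k/|v|` of fractional powers `v^(k/|v|)` occurring in `u`,
with `|v| ≥ n`. -/
def expSet (u : ℕ → A) (n : ℕ) : Set ℝ :=
  {x | ∃ (v : List A) (k : ℕ), v ≠ [] ∧ n ≤ v.length ∧
    IsFactorS (powPref v k) u ∧ x = (k : ℝ) / (v.length : ℝ)}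

/-- The critical exponent of a sequence, with values in `EReal`. -/
noncomputable def critExp (u : ℕ → A) : EReal :=
  sSup ((fun x : ℝ => (x : EReal)) '' expSet u 0)

/-- The asymptotic critical exponent of a sequence: `⊤` if the critical exponent is `⊤`,
otherwise the limit (= infimum, by monotonicity) over `n` of the suprema of exponents of
powers `v^e` with `|v| ≥ n`. -/
noncomputable def acritExp (u : ℕ → A) : EReal :=
  if critExp u = ⊤ then ⊤
  else ⨅ n : ℕ, sSup ((fun x : ℝ => (x : EReal)) '' expSet u n)

/-- The morphism `φ_d` on letters: `i ↦ 0(i+1)` for `i < d-1`, `d-1 ↦ 0(d-1)(d-1)`. -/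
def phiL (d : ℕ) (i : ℕ) : List ℕ :=
  if i < d - 1 then [0, i + 1] else [0, d - 1, d - 1]

/-- The morphism `φ_d` on words. -/
def phiW (d : ℕ) (w : List ℕ) : List ℕ := w.flatMap (phiL d)

/-- `u` is the fixed point of `φ_d`: it begins with `0` and `φ_d(u) = u`, i.e. the image
of every prefix of `u` is again a prefix of `u`. -/
def IsPhiFixed (d : ℕ) (u : ℕ → ℕ) : Prop :=
  u 0 = 0 ∧ ∀ m : ℕ, OccursAt (phiW d ((List.range m).map u)) u 0

/-- Left extensions of `w` in `u`. -/
def Lext (u : ℕ → ℕ) (w : List ℕ) : Set (List ℕ) :=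
  {x | ∃ i : ℕ, x = i :: w ∧ IsFactorS x u}

/-- Right extensions of `w` in `u`. -/
def Rext (u : ℕ → ℕ) (w : List ℕ) : Set (List ℕ) :=
  {x | ∃ i : ℕ, x = w ++ [i] ∧ IsFactorS x u}

/-- Both-sided extensions of `w` in `u`. -/
def Bext (u : ℕ → ℕ) (w : List ℕ) : Set (List ℕ) :=
  {x | ∃ i j : ℕ, x = i :: (w ++ [j]) ∧ IsFactorS x u}

/-- `w` is a bispecial factor of `u`. -/
def Bispecial (u : ℕ → ℕ) (w : List ℕ) : Prop :=
  IsFactorS w u ∧ 2 ≤ (Lext u w).ncard ∧ 2 ≤ (Rext u w).ncard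

/-- The bilateral order `b(w) = #Bext(w) − #Lext(w) − #Rext(w) + 1`. -/
noncomputable def bord (u : ℕ → ℕ) (w : List ℕ) : ℤ :=
  ((Bext u w).ncard : ℤ) - ((Lext u w).ncard : ℤ) - ((Rext u w).ncard : ℤ) + 1

/-- The palindromes `F_0 = ε`, `F_i = φ(F_{i-1})0`. -/
def Fword (d : ℕ) : ℕ → List ℕ
  | 0 => []
  | i + 1 => phiW d (Fword d i) ++ [0]

/-- Membership in the set `𝒯` of bispecial triplets. -/
def TripleMem (d : ℕ) (u : ℕ → ℕ) (t : ℕ × List ℕ × ℕ) : Prop :=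
  Bispecial u t.2.1 ∧ t.1 < d - 1 ∧ t.2.2 < d - 1 ∧
    IsFactorS (t.1 :: t.2.1) u ∧ IsFactorS (t.2.1 ++ [t.2.2]) u

/-- The map `f` on triplets. -/
def fmap (d : ℕ) (t : ℕ × List ℕ × ℕ) : ℕ × List ℕ × ℕ :=
  ((t.1 + 1) % (d - 1),
   (if t.1 = d - 2 then [d - 1] else []) ++ phiW d t.2.1 ++ [0] ++
     (if t.2.2 = d - 2 then [d - 1] else []),
   (t.2.2 + 1) % (d - 1))

/-- The initial triplets `T_k = (0, ε, k)` for `k ≤ d-2` and `T_{d-1} = (0, d-1, 0)`. -/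
def Tinit (d k : ℕ) : ℕ × List ℕ × ℕ :=
  if k = d - 1 then (0, [d - 1], 0) else (0, ([] : List ℕ), k)

/-- The Parikh vector of a word. -/
def parikh (d : ℕ) (w : List ℕ) : Fin d → ℕ := fun i => w.count (i : ℕ)

/-- The incidence matrix of `φ_d`. -/
def Mmat (d : ℕ) : Matrix (Fin d) (Fin d) ℕ := fun i j => (phiL d (j : ℕ)).count (i : ℕ)

/-- `r` is a return word to `w` in `u`. -/
def ReturnWord (u : ℕ → ℕ) (w r : List ℕ) : Prop :=
  ∃ j ℓ : ℕ, j < ℓ ∧ OccursAt w u j ∧ OccursAt w u ℓ ∧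
    (∀ m, j < m → m < ℓ → ¬ OccursAt w u m) ∧
    r = (List.range (ℓ - j)).map fun t => u (j + t)

/-- `R` is a complete return word to `w` in `u`. -/
def CompleteReturn (u : ℕ → ℕ) (w R : List ℕ) : Prop :=
  ∃ r : List ℕ, ReturnWord u w r ∧ R = r ++ w

/-! ### Combinatorial structure of the fixed point -/

/-- Arithmetic description of the fixed point: `P m` is the starting position of the image of
the `m`-th letter. -/
structure St (D : ℕ) (u P : ℕ → ℕ) : Prop where
  hD : 2 ≤ D
  P0 : P 0 = 0
  le : ∀ m, u m ≤ D
  Plt : ∀ m, u m < D → P (m + 1) = P m + 2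
  Peq : ∀ m, u m = D → P (m + 1) = P m + 3
  z : ∀ m, u (P m) = 0
  lt1 : ∀ m, u m < D → u (P m + 1) = u m + 1
  eq1 : ∀ m, u m = D → u (P m + 1) = D
  eq2 : ∀ m, u m = D → u (P m + 2) = D

theorem exists_block (P : ℕ → ℕ) (h0 : P 0 = 0) (h1 : ∀ m, P m < P (m + 1)) (x : ℕ) :
    ∃ m, P m ≤ x ∧ x < P (m + 1) := by
  induction x with
  | zero => exact ⟨0, by omega, by have := h1 0; omega⟩
  | succ x ih =>
    obtain ⟨m, h2, h3⟩ := ih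
    by_cases h : x + 1 < P (m + 1)
    · exact ⟨m, by omega, h⟩
    · exact ⟨m + 1, by omega, by have := h1 (m + 1); omega⟩

theorem exists_St (d : ℕ) (hd : 3 ≤ d) (u : ℕ → ℕ) (hu : IsPhiFixed d u) :
    ∃ P, St (d - 1) u P := by
  obtain ⟨h0, hu⟩ := hu
  let P : ℕ → ℕ := fun m => (phiW d ((List.range m).map u)).length
  have hsucc : ∀ m, phiW d ((List.range (m + 1)).map u)
      = phiW d ((List.range m).map u) ++ phiL d (u m) := by
    intro m
    simp [phiW, List.range_succ]
  have hP : ∀ m, P (m + 1) = P m + (phiL d (u m)).length := by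
    intro m
    simp only [P, hsucc, List.length_append]
  have hget : ∀ m t, ∀ ht : t < (phiL d (u m)).length, u (P m + t) = (phiL d (u m))[t] := by
    intro m t ht
    have h := hu (m + 1)
    unfold OccursAt at h
    have h1 : P m + t < (phiW d ((List.range (m + 1)).map u)).length := by
      have := hP m
      simp only [P] at this ⊢
      omega
    have h2 := List.getElem_of_eq h h1
    simp only [List.getElem_map, List.getElem_range, zero_add] at h2
    rw [← h2]
    have h3 := List.getElem_of_eq (hsucc m) h1
    rw [h3, List.getElem_append_right (by simp [P])]
    simp [P]
  have hlen : ∀ x, 2 ≤ (phiL d x).length := by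
    intro x; unfold phiL; split_ifs <;> simp
  have hmono : ∀ m, P m < P (m + 1) := by
    intro m; have := hP m; have := hlen (u m); omega
  have hle : ∀ m, u m ≤ d - 1 := by
    intro x
    obtain ⟨m, h1, h2⟩ := exists_block P (by simp [P, phiW]) hmono x
    obtain ⟨t, rfl⟩ := Nat.exists_eq_add_of_le h1
    have ht : t < (phiL d (u m)).length := by have := hP m; omega
    rw [hget m t ht]
    have hmem := List.getElem_mem ht
    generalize (phiL d (u m))[t] = y at hmem
    unfold phiL at hmem
    split_ifs at hmem <;> simp at hmem <;> omega
  refine ⟨P, ⟨by omega, by simp [P, phiW], hle, ?_, ?_, ?_, ?_, ?_, ?_⟩⟩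
  · intro m h; rw [hP]; simp [phiL, h]
  · intro m h; rw [hP]; simp [phiL, h]
  · intro m
    have := hget m 0 (by have := hlen (u m); omega)
    rw [add_zero] at this
    rw [this]; unfold phiL; split_ifs <;> simp
  · intro m h
    rw [hget m 1 (by have := hlen (u m); omega)]; simp [phiL, h]
  · intro m h
    rw [hget m 1 (by have := hlen (u m); omega)]; simp [phiL, h]
  · intro m h
    rw [hget m 2 (by simp [phiL, h])]; simp [phiL, h]

namespace St

variable {D : ℕ} {u P : ℕ → ℕ}

theorem u0 (S : St D u P) : u 0 = 0 := by
  have := S.z 0; rwa [S.P0] at this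

theorem cases (S : St D u P) (m : ℕ) :
    (u m < D ∧ P (m + 1) = P m + 2 ∧ u (P m + 1) = u m + 1) ∨
    (u m = D ∧ P (m + 1) = P m + 3 ∧ u (P m + 1) = D ∧ u (P m + 2) = D) := by
  rcases Nat.lt_or_ge (u m) D with h | h
  · exact Or.inl ⟨h, S.Plt m h, S.lt1 m h⟩
  · have h : u m = D := le_antisymm (S.le m) h
    exact Or.inr ⟨h, S.Peq m h, S.eq1 m h, S.eq2 m h⟩

theorem step (S : St D u P) (m : ℕ) : P m + 2 ≤ P (m + 1) ∧ P (m + 1) ≤ P m + 3 := by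
  rcases S.cases m with h | h <;> omega

theorem mono2 (S : St D u P) (m k : ℕ) : P m + 2 * k ≤ P (m + k) := by
  induction k with
  | zero => simp
  | succ k ih => have := S.step (m + k); rw [← add_assoc]; omega

theorem lt_iff (S : St D u P) {a b : ℕ} : P a < P b ↔ a < b := by
  constructor
  · intro h
    by_contra hc
    obtain ⟨k, rfl⟩ := Nat.exists_eq_add_of_le (not_lt.mp hc)
    have := S.mono2 b k; omega
  · intro h
    obtain ⟨k, rfl⟩ := Nat.exists_eq_add_of_le (Nat.le_of_lt h)
    have := S.mono2 a k; omega

theorem block (S : St D u P) (x : ℕ) : ∃ m, P m ≤ x ∧ x < P (m + 1) :=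
  exists_block P S.P0 (fun m => by have := S.step m; omega) x

theorem zero_pos (S : St D u P) {x : ℕ} (h : u x = 0) : ∃ m, x = P m := by
  have hD := S.hD
  obtain ⟨m, h1, h2⟩ := S.block x
  refine ⟨m, ?_⟩
  by_contra hne
  rcases S.cases m with ⟨h3, h4, h5⟩ | ⟨h3, h4, h5, h6⟩
  · have : x = P m + 1 := by omega
    rw [this] at h; omega
  · have : x = P m + 1 ∨ x = P m + 2 := by omega
    rcases this with rfl | rfl <;> omega

theorem after (S : St D u P) {x : ℕ} (h : u x ≠ 0) :
    u (x + 1) = 0 ∨ (u x = D ∧ u (x + 1) = D ∧ u (x + 2) = 0) := by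
  obtain ⟨m, h1, h2⟩ := S.block x
  have hz := S.z m
  have hz' := S.z (m + 1)
  rcases S.cases m with ⟨h3, h4, h5⟩ | ⟨h3, h4, h5, h6⟩
  · have : x = P m ∨ x = P m + 1 := by omega
    rcases this with rfl | rfl
    · exact absurd hz h
    · left; rw [h4] at hz'; exact hz'
  · rw [h4] at hz'
    have : x = P m ∨ x = P m + 1 ∨ x = P m + 2 := by omega
    rcases this with rfl | rfl | rfl
    · exact absurd hz h
    · right; exact ⟨h5, h6, hz'⟩
    · left; assumption

/-- Images of matching stretches match. -/
theorem match_img (S : St D u P) {a b n : ℕ} (h : ∀ k < n, u (a + k) = u (b + k)) :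
    P (a + n) + P b = P (b + n) + P a ∧
      ∀ x, P a + x < P (a + n) → u (P a + x) = u (P b + x) := by
  induction n with
  | zero => exact ⟨by simp [add_comm], fun x hx => by simp at hx⟩
  | succ n ih =>
    obtain ⟨h1, h2⟩ := ih fun k hk => h k (by omega)
    have hn := h n (by omega)
    have za := S.z (a + n)
    have zb := S.z (b + n)
    have ma := S.mono2 a n
    have mb := S.mono2 b n
    rw [← add_assoc, ← add_assoc]
    rcases S.cases (a + n) with ⟨h3, h4, h5⟩ | ⟨h3, h4, h5, h6⟩
    · rcases S.cases (b + n) with ⟨h3', h4', h5'⟩ | ⟨h3', h4', h5', h6'⟩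
      · refine ⟨by omega, fun x hx => ?_⟩
        by_cases hx1 : P a + x < P (a + n)
        · exact h2 x hx1
        · have : (P a + x = P (a + n) ∧ P b + x = P (b + n)) ∨
            (P a + x = P (a + n) + 1 ∧ P b + x = P (b + n) + 1) := by omega
          rcases this with ⟨e1, e2⟩ | ⟨e1, e2⟩ <;> rw [e1, e2] <;> omega
      · omega
    · rcases S.cases (b + n) with ⟨h3', h4', h5'⟩ | ⟨h3', h4', h5', h6'⟩
      · omega
      · refine ⟨by omega, fun x hx => ?_⟩
        by_cases hx1 : P a + x < P (a + n)
        · exact h2 x hx1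
        · have : (P a + x = P (a + n) ∧ P b + x = P (b + n)) ∨
            (P a + x = P (a + n) + 1 ∧ P b + x = P (b + n) + 1) ∨
            (P a + x = P (a + n) + 2 ∧ P b + x = P (b + n) + 2) := by omega
          rcases this with ⟨e1, e2⟩ | ⟨e1, e2⟩ | ⟨e1, e2⟩ <;> rw [e1, e2] <;> omega

/-- Right extension of a mismatch under the morphism. -/
theorem right_img (S : St D u P) {x y : ℕ} (h : u x ≠ u y) :
    ∃ e ≤ 1, (∀ k ≤ e, u (P x + k) = u (P y + k)) ∧
      u (P x + (1 + e)) ≠ u (P y + (1 + e)) ∧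
      ((e = 0 ∧ min (u (P x + (1 + e))) (u (P y + (1 + e))) = min (u x) (u y) + 1) ∨
       (e = 1 ∧ u (P x + 1) = D ∧ min (u x) (u y) + 1 = D ∧
        min (u (P x + (1 + e))) (u (P y + (1 + e))) = 0)) := by
  have hD := S.hD
  have zx := S.z x
  have zy := S.z y
  have zx' := S.z (x + 1)
  have zy' := S.z (y + 1)
  have key0 : u (P x + 1) ≠ u (P y + 1) →
      min (u (P x + 1)) (u (P y + 1)) = min (u x) (u y) + 1 →
      ∃ e ≤ 1, (∀ k ≤ e, u (P x + k) = u (P y + k)) ∧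
      u (P x + (1 + e)) ≠ u (P y + (1 + e)) ∧
      ((e = 0 ∧ min (u (P x + (1 + e))) (u (P y + (1 + e))) = min (u x) (u y) + 1) ∨
       (e = 1 ∧ u (P x + 1) = D ∧ min (u x) (u y) + 1 = D ∧
        min (u (P x + (1 + e))) (u (P y + (1 + e))) = 0)) := by
    intro h1 h2
    refine ⟨0, by omega, ?_, h1, Or.inl ⟨rfl, h2⟩⟩
    intro k hk
    obtain rfl : k = 0 := by omega
    simp [zx, zy]
  have key1 : u (P x + 1) = D → u (P y + 1) = D → u (P x + 2) ≠ u (P y + 2) →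
      min (u x) (u y) + 1 = D → min (u (P x + 2)) (u (P y + 2)) = 0 →
      ∃ e ≤ 1, (∀ k ≤ e, u (P x + k) = u (P y + k)) ∧
      u (P x + (1 + e)) ≠ u (P y + (1 + e)) ∧
      ((e = 0 ∧ min (u (P x + (1 + e))) (u (P y + (1 + e))) = min (u x) (u y) + 1) ∨
       (e = 1 ∧ u (P x + 1) = D ∧ min (u x) (u y) + 1 = D ∧
        min (u (P x + (1 + e))) (u (P y + (1 + e))) = 0)) := by
    intro h1 h2 h3 h4 h5
    refine ⟨1, le_rfl, ?_, h3, Or.inr ⟨rfl, h1, h4, h5⟩⟩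
    intro k hk
    have : k = 0 ∨ k = 1 := by omega
    rcases this with rfl | rfl
    · simp [zx, zy]
    · rw [h1, h2]
  rcases S.cases x with ⟨h3, h4, h5⟩ | ⟨h3, h4, h5, h6⟩ <;>
  rcases S.cases y with ⟨h3', h4', h5'⟩ | ⟨h3', h4', h5', h6'⟩ <;> rw [h4] at zx' <;>
    rw [h4'] at zy'
  · refine key0 ?_ ?_ <;> clear key0 key1 <;> omega
  · by_cases hx : u x + 1 = D
    · refine key1 ?_ ?_ ?_ ?_ ?_ <;> clear key0 key1 <;> omega
    · refine key0 ?_ ?_ <;> clear key0 key1 <;> omega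
  · by_cases hx : u y + 1 = D
    · refine key1 ?_ ?_ ?_ ?_ ?_ <;> clear key0 key1 <;> omega
    · refine key0 ?_ ?_ <;> clear key0 key1 <;> omega
  · exact absurd (h3.trans h3'.symm) h

/-- Left extension of a mismatch under the morphism. -/
theorem left_img (S : St D u P) {x y : ℕ} (h : u x ≠ u y) :
    ∃ x' y', u x' ≠ u y' ∧
      ((P (x + 1) = x' + 1 ∧ P (y + 1) = y' + 1 ∧ min (u x') (u y') = min (u x) (u y) + 1) ∨
       (P (x + 1) = x' + 2 ∧ P (y + 1) = y' + 2 ∧ u (x' + 1) = D ∧ u (y' + 1) = D ∧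
        min (u x) (u y) + 1 = D ∧ min (u x') (u y') = 0)) := by
  have hD := S.hD
  have zx := S.z x
  have zy := S.z y
  rcases S.cases x with ⟨h3, h4, h5⟩ | ⟨h3, h4, h5, h6⟩ <;>
  rcases S.cases y with ⟨h3', h4', h5'⟩ | ⟨h3', h4', h5', h6'⟩
  · exact ⟨P x + 1, P y + 1, by omega, Or.inl ⟨by omega, by omega, by omega⟩⟩
  · by_cases hx : u x + 1 = D
    · exact ⟨P x, P y + 1, by omega,
        Or.inr ⟨by omega, by omega, by omega, h6', by omega, by omega⟩⟩
    · exact ⟨P x + 1, P y + 2, by omega, Or.inl ⟨by omega, by omega, by omega⟩⟩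
  · by_cases hx : u y + 1 = D
    · exact ⟨P x + 1, P y, by omega,
        Or.inr ⟨by omega, by omega, h6, by omega, by omega, by omega⟩⟩
    · exact ⟨P x + 2, P y + 1, by omega, Or.inl ⟨by omega, by omega, by omega⟩⟩
  · omega

/-- The fixed point is not eventually periodic. -/
theorem nonper (S : St D u P) : ∀ p i j : ℕ, j = i + p → 0 < p →
    ∃ t, u (i + t) ≠ u (j + t) := by
  intro p
  induction p using Nat.strong_induction_on with
  | _ p ih =>
    intro i j hj hp
    by_contra hc
    push Not at hc
    have hi : i ≤ P i := by have := S.mono2 0 i; simp [S.P0] at this; omega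
    have h1 : u (j + (P i - i)) = 0 := by
      rw [← hc, show i + (P i - i) = P i by omega, S.z]
    obtain ⟨m, hm⟩ := S.zero_pos h1
    have him : i < m := S.lt_iff.mp (by omega)
    obtain ⟨q, rfl⟩ := Nat.exists_eq_add_of_le (Nat.le_of_lt him)
    have hq := S.mono2 i q
    have hall : ∀ x, u (P i + x) = u (P (i + q) + x) := by
      intro x
      have := hc (P i - i + x)
      rwa [show i + (P i - i + x) = P i + x by omega,
        show j + (P i - i + x) = P (i + q) + x by omega] at this
    obtain ⟨t, ht⟩ := ih q (by omega) i (i + q) rfl (by omega)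
    classical
    let n := Nat.find (⟨t, ht⟩ : ∃ t, u (i + t) ≠ u (i + q + t))
    have hn : u (i + n) ≠ u (i + q + n) :=
      Nat.find_spec (⟨t, ht⟩ : ∃ t, u (i + t) ≠ u (i + q + t))
    have hlt : ∀ k < n, u (i + k) = u (i + q + k) := fun k hk => by
      have := Nat.find_min (⟨t, ht⟩ : ∃ t, u (i + t) ≠ u (i + q + t)) hk
      simpa using this
    have hP := (S.match_img hlt).1
    obtain ⟨e, -, -, he, -⟩ := S.right_img hn
    apply he
    have h2 := hall (P (i + n) - P i + (1 + e))
    have h3 := S.mono2 i n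
    rwa [show P i + (P (i + n) - P i + (1 + e)) = P (i + n) + (1 + e) by omega,
      show P (i + q) + (P (i + n) - P i + (1 + e)) = P (i + q + n) + (1 + e) by omega] at h2

end St

/-- A maximal pair of matching stretches of `u`. -/
structure MP (u : ℕ → ℕ) (i j n : ℕ) : Prop where
  lt : i < j
  eq : ∀ t < n, u (i + t) = u (j + t)
  ne : u (i + n) ≠ u (j + n)
  left : ∀ i', i = i' + 1 → ∀ j', j = j' + 1 → u i' ≠ u j'

theorem MP.unique {u : ℕ → ℕ} {i n i2 n2 p z : ℕ} (h : MP u i (i + p) n)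
    (h2 : MP u i2 (i2 + p) n2) (h3 : i ≤ z) (h4 : z ≤ i + n) (h5 : i2 ≤ z) (h6 : z ≤ i2 + n2) :
    i = i2 ∧ n = n2 := by
  have aux : ∀ {i n i2 n2 : ℕ}, MP u i (i + p) n → MP u i2 (i2 + p) n2 → i ≤ z → z ≤ i + n →
      i2 ≤ z → z ≤ i2 + n2 → i ≤ i2 := by
    intro i n i2 n2 h h2 h3 h4 h5 h6
    by_contra hc
    obtain ⟨k, rfl⟩ := Nat.exists_eq_add_of_lt (not_le.mp hc)
    apply h.left (i2 + k) rfl (i2 + k + p) (by omega)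
    have := h2.eq k (by omega)
    rwa [show i2 + p + k = i2 + k + p by omega] at this
  have e : i = i2 := le_antisymm (aux h h2 h3 h4 h5 h6) (aux h2 h h5 h6 h3 h4)
  subst e
  refine ⟨rfl, ?_⟩
  rcases Nat.lt_trichotomy n n2 with hl | hl | hl
  · exact absurd (h2.eq n hl) h.ne
  · exact hl
  · exact absurd (h.eq n2 hl) h2.ne

theorem St.exists_MP {D : ℕ} {u P : ℕ → ℕ} (S : St D u P) {p : ℕ} (hp : 0 < p) (i : ℕ) :
    ∃ k n, k ≤ n ∧ k ≤ i ∧ MP u (i - k) (i - k + p) n := by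
  classical
  have ex := S.nonper p i (i + p) rfl hp
  have h1 := Nat.find_spec ex
  have h2 : ∀ k < Nat.find ex, u (i + k) = u (i + p + k) := fun k hk => by
    have := Nat.find_min ex hk
    simpa using this
  generalize Nat.find ex = n at h1 h2
  clear ex
  induction i generalizing n with
  | zero => exact ⟨0, n, by omega, by omega, ⟨by omega, h2, h1, fun i' h => by omega⟩⟩
  | succ i ih =>
    by_cases hc : u i = u (i + p)
    · obtain ⟨k, m, h3, h4, h5⟩ := ih (n + 1)
        (by rwa [show i + (n + 1) = i + 1 + n by omega,
              show i + p + (n + 1) = i + 1 + p + n by omega])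
        (by
          intro k hk
          rcases Nat.eq_zero_or_pos k with rfl | hk0
          · simpa using hc
          · have := h2 (k - 1) (by omega)
            rwa [show i + 1 + (k - 1) = i + k by omega,
              show i + 1 + p + (k - 1) = i + p + k by omega] at this)
      have hkm : k + 1 ≤ m := by
        by_contra hlt
        obtain rfl : k = m := by omega
        have h6 := h5.ne
        rw [show i - k + k = i by omega, show i - k + p + k = i + p by omega] at h6
        exact h6 hc
      refine ⟨k + 1, m, hkm, by omega, ?_⟩
      rwa [show i + 1 - (k + 1) = i - k by omega]
    · refine ⟨0, n, by omega, by omega, ⟨by omega, h2, h1, fun i' h j' h' => ?_⟩⟩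
      obtain rfl : i' = i := by omega
      obtain rfl : j' = i' + p := by omega
      exact hc

/-! ### Weights -/

/-- The left eigenvector of the incidence matrix. -/
noncomputable def lw (Λ : ℝ) (i : ℕ) : ℝ := (Λ ^ i * (Λ - 2) + 1) / (Λ - 1)

/-- Normalising constant of the potential. -/
noncomputable def kap (Λ : ℝ) : ℝ := (Λ - 2) / ((3 - Λ) * (Λ - 1))

/-- Hypotheses on `Λ`. -/
structure Par (Λ : ℝ) (D : ℕ) : Prop where
  h1 : 2 < Λ
  h2 : Λ < 3
  h : Λ ^ D * (Λ - 2) ^ 2 = 1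

namespace Par

variable {Λ : ℝ} {D : ℕ}

theorem lw_zero (Q : Par Λ D) : lw Λ 0 = 1 := by
  have := Q.h1
  unfold lw
  rw [div_eq_one_iff_eq (by linarith)]; ring

theorem lw_succ (Q : Par Λ D) (i : ℕ) : lw Λ (i + 1) = Λ * lw Λ i - 1 := by
  have := Q.h1
  have h : Λ - 1 ≠ 0 := by linarith
  unfold lw
  field_simp
  ring

theorem one_le (Q : Par Λ D) (i : ℕ) : 1 ≤ lw Λ i := by
  have := Q.h1
  induction i with
  | zero => rw [Q.lw_zero]
  | succ i ih => rw [Q.lw_succ]; nlinarith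

theorem mono (Q : Par Λ D) : Monotone (lw Λ) := by
  have := Q.h1
  refine monotone_nat_of_le_succ fun i => ?_
  rw [Q.lw_succ]
  have := Q.one_le i
  nlinarith

theorem top (Q : Par Λ D) : (Λ - 2) * lw Λ D = 1 := by
  have := Q.h1
  have h : Λ - 1 ≠ 0 := by linarith
  have h3 := Q.h
  unfold lw
  field_simp
  linear_combination h3

theorem kap_pos (Q : Par Λ D) : 0 < kap Λ := by
  have := Q.h1
  have := Q.h2
  unfold kap
  exact div_pos (by linarith) (mul_pos (by linarith) (by linarith))

theorem kap_pow (Q : Par Λ D) : kap Λ * Λ ^ D = lw Λ D + kap Λ := by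
  have h1 := Q.h1
  have h2 := Q.h2
  have h3 := Q.h
  have h4 : Λ - 2 ≠ 0 := by linarith
  have h5 : Λ - 1 ≠ 0 := by linarith
  have h6 : 3 - Λ ≠ 0 := by linarith
  have h7 : lw Λ D = 1 / (Λ - 2) := by
    rw [eq_div_iff h4, mul_comm]; exact Q.top
  rw [h7]
  unfold kap
  field_simp
  linear_combination h3

theorem lw_kap (Q : Par Λ D) (k : ℕ) :
    lw Λ k / (3 - Λ) = 1 / (Λ - 1) + kap Λ * (1 + Λ ^ k) := by
  have h1 := Q.h1
  have h2 := Q.h2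
  have h5 : Λ - 1 ≠ 0 := by linarith
  have h6 : 3 - Λ ≠ 0 := by linarith
  unfold lw kap
  field_simp
  ring

theorem top_eq (Q : Par Λ D) : lw Λ D / (3 - Λ) = lw Λ D + 1 / (Λ - 1) + kap Λ * 2 := by
  rw [Q.lw_kap, mul_add, Q.kap_pow]; ring

end Par

/-- Weighted prefix sums. -/
def FF (f : ℕ → ℝ) (u : ℕ → ℕ) (m : ℕ) : ℝ := ∑ t ∈ Finset.range m, f (u t)

theorem FF_succ (f : ℕ → ℝ) (u : ℕ → ℕ) (m : ℕ) : FF f u (m + 1) = FF f u m + f (u m) :=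
  Finset.sum_range_succ _ _

theorem FF_bound {f : ℕ → ℝ} {u : ℕ → ℕ} {K : ℝ} (h0 : ∀ m, 0 ≤ f (u m))
    (h1 : ∀ m, f (u m) ≤ K) (a k : ℕ) :
    FF f u a ≤ FF f u (a + k) ∧ FF f u (a + k) ≤ FF f u a + k * K := by
  induction k with
  | zero => simp
  | succ k ih =>
    rw [← add_assoc, FF_succ]
    have := h0 (a + k)
    have := h1 (a + k)
    push_cast
    constructor <;> linarith [ih.1, ih.2]

theorem FF_match {f : ℕ → ℝ} {u : ℕ → ℕ} {a b n : ℕ} (h : ∀ k < n, u (a + k) = u (b + k)) :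
    FF f u (a + n) - FF f u a = FF f u (b + n) - FF f u b := by
  induction n with
  | zero => simp
  | succ n ih =>
    rw [← add_assoc, ← add_assoc, FF_succ, FF_succ, h n (by omega)]
    linarith [ih fun k hk => h k (by omega)]

/-- Pull back of a weight by the morphism, normalised. -/
noncomputable def push (Λ : ℝ) (D : ℕ) (f : ℕ → ℝ) (x : ℕ) : ℝ :=
  (f 0 + if x < D then f (x + 1) else 2 * f D) / Λ

section

variable {Λ : ℝ} {D : ℕ} {u P : ℕ → ℕ}

theorem FF_push (Q : Par Λ D) (S : St D u P) (f : ℕ → ℝ) (m : ℕ) :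
    FF f u (P m) = Λ * FF (push Λ D f) u m := by
  have h1 := Q.h1
  have h0 : Λ ≠ 0 := by linarith
  induction m with
  | zero => simp [S.P0, FF]
  | succ m ih =>
    rw [FF_succ, mul_add, ← ih]
    rcases S.cases m with ⟨h3, h4, h5⟩ | ⟨h3, h4, h5, h6⟩
    · rw [h4, show P m + 2 = P m + 1 + 1 by rfl, FF_succ, FF_succ, S.z, h5]
      simp only [push, h3, if_true]
      field_simp
      ring
    · rw [h4, show P m + 3 = P m + 1 + 1 + 1 by rfl, FF_succ, FF_succ, FF_succ, S.z, h5,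
        show P m + 1 + 1 = P m + 2 by rfl, h6]
      simp only [push, h3, lt_irrefl, if_false]
      field_simp
      ring

theorem push_lw (Q : Par Λ D) {x : ℕ} (hx : x ≤ D) : push Λ D (lw Λ) x = lw Λ x := by
  have h1 := Q.h1
  have h0 : Λ ≠ 0 := by linarith
  unfold push
  rw [div_eq_iff h0, Q.lw_zero]
  split_ifs with h
  · rw [Q.lw_succ]; ring
  · obtain rfl : x = D := by omega
    have := Q.top
    linarith

theorem LL_P (Q : Par Λ D) (S : St D u P) (m : ℕ) :
    FF (lw Λ) u (P m) = Λ * FF (lw Λ) u m := by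
  rw [FF_push Q S]
  unfold FF
  congr 1
  exact Finset.sum_congr rfl fun t _ => push_lw Q (S.le t)

/-- Left part of the potential. -/
noncomputable def LP (Λ : ℝ) (u : ℕ → ℕ) (i j : ℕ) : ℝ :=
  if i = 0 then 0 else Λ ^ (min (u (i - 1)) (u (j - 1)))

/-- The potential of a pair. -/
noncomputable def Phi (Λ : ℝ) (u : ℕ → ℕ) (i j n : ℕ) : ℝ :=
  FF (lw Λ) u (i + n) - FF (lw Λ) u i + 1 / (Λ - 1)
    + kap Λ * (LP Λ u i j + Λ ^ (min (u (i + n)) (u (j + n))))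

theorem left_step (Q : Par Λ D) (S : St D u P) {i j n : ℕ} (h : MP u i j n) :
    ∃ i2 j2 e δ, P i = i2 + e ∧ P j = j2 + e ∧ e ≤ 1 ∧ (∀ k < e, u (i2 + k) = u (j2 + k)) ∧
      (∀ i', i2 = i' + 1 → ∀ j', j2 = j' + 1 → u i' ≠ u j') ∧
      FF (lw Λ) u (P i) = FF (lw Λ) u i2 + δ ∧ FF (lw Λ) u (P j) = FF (lw Λ) u j2 + δ ∧
      δ + kap Λ * LP Λ u i2 j2 = Λ * (kap Λ * LP Λ u i j) := by
  have hlt := h.lt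
  rcases Nat.eq_zero_or_pos i with rfl | hi
  · refine ⟨0, P j, 0, 0, by simp [S.P0], rfl, by omega, by simp, by intros; omega, ?_, by simp, ?_⟩
    · simp [S.P0]
    · simp [LP]
  · obtain ⟨x, rfl⟩ : ∃ x, i = x + 1 := ⟨i - 1, by omega⟩
    obtain ⟨y, rfl⟩ : ∃ y, j = y + 1 := ⟨j - 1, by omega⟩
    obtain ⟨x', y', hne, hc⟩ := S.left_img (h.left x rfl y rfl)
    rcases hc with ⟨e1, e2, e3⟩ | ⟨e1, e2, e3, e4, e5, e6⟩
    · refine ⟨x' + 1, y' + 1, 0, 0, e1, e2, by omega, by simp, ?_, by simp [e1], by simp [e2], ?_⟩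
      · intro i' hi' j' hj'
        obtain rfl : i' = x' := by omega
        obtain rfl : j' = y' := by omega
        exact hne
      · simp only [LP, Nat.add_eq_zero_iff, one_ne_zero, and_false, if_false,
          Nat.add_sub_cancel, e3, pow_succ]
        ring
    · refine ⟨x' + 1, y' + 1, 1, lw Λ D, e1, e2, by omega, ?_, ?_, ?_, ?_, ?_⟩
      · intro k hk
        obtain rfl : k = 0 := by omega
        simp [e3, e4]
      · intro i' hi' j' hj'
        obtain rfl : i' = x' := by omega
        obtain rfl : j' = y' := by omega
        exact hne
      · rw [e1, show x' + 2 = x' + 1 + 1 by rfl, FF_succ, e3]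
      · rw [e2, show y' + 2 = y' + 1 + 1 by rfl, FF_succ, e4]
      · simp only [LP, Nat.add_eq_zero_iff, one_ne_zero, and_false, if_false,
          Nat.add_sub_cancel, e6, pow_zero]
        have := Q.kap_pow
        rw [← e5, pow_succ] at this
        rw [e5] at this
        linarith

theorem right_step (Q : Par Λ D) (S : St D u P) {x y : ℕ} (h : u x ≠ u y) :
    ∃ e ≤ 1, (∀ k ≤ e, u (P x + k) = u (P y + k)) ∧
      u (P x + (1 + e)) ≠ u (P y + (1 + e)) ∧
      FF (lw Λ) u (P x + (1 + e)) + kap Λ * Λ ^ (min (u (P x + (1 + e))) (u (P y + (1 + e))))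
        = Λ * FF (lw Λ) u x + 1 + Λ * (kap Λ * Λ ^ (min (u x) (u y))) := by
  obtain ⟨e, h1, h2, h3, h4⟩ := S.right_img h
  refine ⟨e, h1, h2, h3, ?_⟩
  rw [← LL_P Q S]
  rcases h4 with ⟨rfl, h5⟩ | ⟨rfl, h5, h6, h7⟩
  · rw [h5, add_zero, FF_succ, S.z, Q.lw_zero, pow_succ]; ring
  · rw [h7, show P x + (1 + 1) = P x + 1 + 1 by rfl, FF_succ, FF_succ, S.z, Q.lw_zero, h5]
    have := Q.kap_pow
    rw [← h6, pow_succ] at this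
    rw [h6] at this
    rw [pow_zero]
    linarith

theorem image_step (Q : Par Λ D) (S : St D u P) {i j n : ℕ} (h : MP u i j n) :
    ∃ i2 j2 n2 e, MP u i2 j2 n2 ∧ P i = i2 + e ∧ P j = j2 + e ∧ P (i + n) < i2 + n2 ∧
      FF (lw Λ) u j2 - FF (lw Λ) u i2 = Λ * (FF (lw Λ) u j - FF (lw Λ) u i) ∧
      Phi Λ u i2 j2 n2 = Λ * Phi Λ u i j n := by
  obtain ⟨i2, j2, e, δ, hi, hj, he, hm, hl, hFi, hFj, hδ⟩ := left_step Q S h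
  obtain ⟨e', he', hm', hne, hR⟩ := right_step Q S h.ne
  obtain ⟨hP, hM⟩ := S.match_img h.eq
  have h1 := S.mono2 i n
  have h2 := S.mono2 j n
  have hij := S.lt_iff.mpr h.lt
  have hn2 : i2 + (P (i + n) + (1 + e') - i2) = P (i + n) + (1 + e') := by omega
  have hn2' : j2 + (P (i + n) + (1 + e') - i2) = P (j + n) + (1 + e') := by omega
  refine ⟨i2, j2, P (i + n) + (1 + e') - i2, e, ⟨by omega, ?_, ?_, hl⟩, hi, hj, by omega, ?_, ?_⟩
  · intro t ht
    by_cases c1 : t < e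
    · exact hm t c1
    · by_cases c2 : i2 + t < P (i + n)
      · have := hM (t - e) (by omega)
        rwa [show P i + (t - e) = i2 + t by omega, show P j + (t - e) = j2 + t by omega] at this
      · have := hm' (i2 + t - P (i + n)) (by omega)
        rwa [show P (i + n) + (i2 + t - P (i + n)) = i2 + t by omega,
          show P (j + n) + (i2 + t - P (i + n)) = j2 + t by omega] at this
  · rw [hn2, hn2']; exact hne
  · rw [LL_P Q S] at hFi hFj
    linarith
  · unfold Phi
    rw [hn2, hn2']
    rw [LL_P Q S] at hFi
    have h3 : Λ * (1 / (Λ - 1)) = 1 + 1 / (Λ - 1) := by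
      have := Q.h1
      have h5 : Λ - 1 ≠ 0 := by linarith
      field_simp
      ring
    linear_combination hR + hδ + hFi - h3

theorem FF_lw_mono (Q : Par Λ D) {a b : ℕ} (h : a ≤ b) : FF (lw Λ) u a ≤ FF (lw Λ) u b := by
  obtain ⟨k, rfl⟩ := Nat.exists_eq_add_of_le h
  induction k with
  | zero => simp
  | succ k ih =>
    rw [← add_assoc, FF_succ]
    have := Q.one_le (u (a + k))
    linarith [ih (by omega)]

theorem FF_lw_mem (Q : Par Λ D) {a b x : ℕ} (h : a ≤ x) (h' : x < b) :
    lw Λ (u x) ≤ FF (lw Λ) u b - FF (lw Λ) u a := by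
  have h1 := FF_lw_mono (u := u) Q h
  have h2 := FF_lw_mono (u := u) Q (show x + 1 ≤ b by omega)
  rw [FF_succ] at h2
  linarith

theorem upper_base0 (Q : Par Λ D) (S : St D u P) {i j : ℕ} (h : MP u i j 0) :
    Phi Λ u i j 0 ≤ (FF (lw Λ) u j - FF (lw Λ) u i) / (3 - Λ) := by
  have h1 := Q.h1
  have h2 := Q.h2
  have hk := Q.kap_pos
  have hlt := h.lt
  have main : ∀ k y, k ≤ u y → i ≤ y → y < j →
      LP Λ u i j + Λ ^ (min (u i) (u j)) ≤ 1 + Λ ^ k →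
      Phi Λ u i j 0 ≤ (FF (lw Λ) u j - FF (lw Λ) u i) / (3 - Λ) := by
    intro k y h3 h4 h5 h6
    have h7 : Phi Λ u i j 0 ≤ lw Λ k / (3 - Λ) := by
      rw [Q.lw_kap]
      unfold Phi
      have := mul_le_mul_of_nonneg_left h6 hk.le
      simp only [add_zero]
      linarith
    refine h7.trans ?_
    have := Q.mono h3
    have := FF_lw_mem (u := u) Q h4 h5
    exact div_le_div_of_nonneg_right (by linarith) (by linarith)
  by_cases hL : LP Λ u i j ≤ 1
  · exact main (min (u i) (u j)) i (min_le_left _ _) le_rfl hlt (by linarith)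
  · have hi : i ≠ 0 := by
      rintro rfl
      exact hL (by simp [LP])
    obtain ⟨x, rfl⟩ : ∃ x, i = x + 1 := ⟨i - 1, by omega⟩
    obtain ⟨y, rfl⟩ : ∃ y, j = y + 1 := ⟨j - 1, by omega⟩
    simp only [LP, Nat.add_eq_zero_iff, one_ne_zero, and_false, if_false,
      Nat.add_sub_cancel] at hL main
    have hmin : min (u x) (u y) ≠ 0 := by
      intro h0
      rw [h0] at hL
      simp at hL
    have ax := S.after (x := x) (by omega)
    have ay := S.after (x := y) (by omega)
    have hne := h.ne
    simp only [add_zero] at hne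
    have hr : min (u (x + 1)) (u (y + 1)) = 0 := by omega
    refine main (min (u x) (u y)) y (min_le_right _ _) (by omega) (by omega) ?_
    rw [hr]
    simp [add_comm]

theorem upper_base1 (Q : Par Λ D) (S : St D u P) {i j n : ℕ} (h : MP u i j (n + 1))
    (hz : ∀ t < n + 1, u (i + t) ≠ 0) :
    Phi Λ u i j (n + 1) ≤ (FF (lw Λ) u j - FF (lw Λ) u i) / (3 - Λ) := by
  have h1 := Q.h1
  have h2 := Q.h2
  have hD := S.hD
  have hlt := h.lt
  have hi : i ≠ 0 := by
    rintro rfl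
    exact hz 0 (by omega) S.u0
  obtain ⟨x, rfl⟩ : ∃ x, i = x + 1 := ⟨i - 1, by omega⟩
  obtain ⟨y, rfl⟩ : ∃ y, j = y + 1 := ⟨j - 1, by omega⟩
  have hl := h.left x rfl y rfl
  have h0 := h.eq 0 (by omega)
  have hz0 := hz 0 (by omega)
  simp only [add_zero] at h0 hz0
  have ax := S.after (x := x)
  have ay := S.after (x := y)
  have ax1 := S.after (x := x + 1)
  have ay1 := S.after (x := y + 1)
  rw [show x + 1 + 1 = x + 2 by rfl] at ax1
  rw [show y + 1 + 1 = y + 2 by rfl] at ay1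
  have hn : n = 0 := by
    by_contra hn
    have e1 := h.eq 1 (by omega)
    have z1 := hz 1 (by omega)
    rw [show x + 1 + 1 = x + 2 by rfl] at e1 z1
    rw [show y + 1 + 1 = y + 2 by rfl] at e1
    omega
  subst hn
  have hne := h.ne
  simp only [zero_add] at hne
  rw [show x + 1 + 1 = x + 2 by rfl, show y + 1 + 1 = y + 2 by rfl] at hne
  have m1 : min (u x) (u y) = 0 := by omega
  have m2 : min (u (x + 2)) (u (y + 2)) = 0 := by omega
  have m3 : u (x + 1) = D := by omega
  unfold Phi LP
  simp only [Nat.add_eq_zero_iff, one_ne_zero, and_false, if_false,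
      Nat.add_sub_cancel, zero_add]
  rw [FF_succ, show x + 1 + 1 = x + 2 by rfl, show y + 1 + 1 = y + 2 by rfl, m1, m2, m3, pow_zero]
  have h3 := FF_lw_mem (u := u) Q (le_refl (x + 1)) hlt
  rw [m3] at h3
  have h4 : lw Λ D / (3 - Λ) ≤ (FF (lw Λ) u (y + 1) - FF (lw Λ) u (x + 1)) / (3 - Λ) :=
    div_le_div_of_nonneg_right h3 (by linarith)
  rw [Q.top_eq] at h4
  linarith

theorem upper (Q : Par Λ D) (S : St D u P) : ∀ n i j : ℕ, MP u i j n →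
    Phi Λ u i j n ≤ (FF (lw Λ) u j - FF (lw Λ) u i) / (3 - Λ) := by
  intro n
  induction n using Nat.strong_induction_on with
  | _ n ih =>
    intro i j h
    by_cases hz : ∃ t < n, u (i + t) = 0
    · obtain ⟨t, ht, hz⟩ := hz
      obtain ⟨a, ha⟩ := S.zero_pos hz
      obtain ⟨b, hb⟩ := S.zero_pos ((h.eq t ht).symm.trans hz)
      have hlt := h.lt
      have hab : a < b := S.lt_iff.mp (by omega)
      obtain ⟨p, rfl⟩ := Nat.exists_eq_add_of_le (Nat.le_of_lt hab)
      obtain ⟨k, n', hk, hka, hM⟩ := S.exists_MP (show 0 < p by omega) a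
      obtain ⟨i2, j2, n2, e, hM2, hi2, hj2, hn2, hF, hPhi⟩ := image_step Q S hM
      have hmi := (S.match_img (n := k) fun x hx => hM.eq x (by omega)).1
      rw [show a - k + k = a by omega, show a - k + p + k = a + p by omega] at hmi
      have hm1 := S.mono2 (a - k) k
      rw [show a - k + k = a by omega] at hm1
      have hm2 := S.mono2 a (n' - k)
      rw [show a + (n' - k) = a - k + n' by omega] at hm2
      obtain ⟨q, rfl⟩ := Nat.exists_eq_add_of_le (Nat.le_of_lt hlt)
      obtain rfl : j2 = i2 + q := by omega
      obtain ⟨rfl, rfl⟩ := h.unique hM2 (z := i + t) (by omega) (by omega) (by omega) (by omega)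
      have := ih n' (by have := S.mono2 (a - k) n'; omega) _ _ hM
      rw [hF, hPhi, mul_div_assoc]
      exact mul_le_mul_of_nonneg_left this (by have := Q.h1; linarith)
    · push Not at hz
      rcases n with _ | n
      · exact upper_base0 Q S h
      · exact upper_base1 Q S h hz

/-- Weighted form of the upper bound for arbitrary repetitions. -/
theorem upper_any (Q : Par Λ D) (S : St D u P) {i p n : ℕ} (hp : 0 < p)
    (h : ∀ t < n, u (i + t) = u (i + p + t)) :
    FF (lw Λ) u (i + n) - FF (lw Λ) u i
      ≤ (FF (lw Λ) u (i + p) - FF (lw Λ) u i) / (3 - Λ) := by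
  have h1 := Q.h1
  have h2 := Q.h2
  obtain ⟨k, m, hk, hki, hM⟩ := S.exists_MP hp i
  have hU := upper Q S _ _ _ hM
  have hnm : i + n ≤ i - k + m := by
    by_contra hc
    apply hM.ne
    have := h (i - k + m - i) (by omega)
    rwa [show i + (i - k + m - i) = i - k + m by omega,
      show i + p + (i - k + m - i) = i - k + p + m by omega] at this
  have hF := FF_match (f := lw Λ) (n := k) fun x hx => hM.eq x (by omega)
  rw [show i - k + k = i by omega, show i - k + p + k = i + p by omega] at hF
  have hF' : FF (lw Λ) u (i - k + p) - FF (lw Λ) u (i - k)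
      = FF (lw Λ) u (i + p) - FF (lw Λ) u i := by linarith
  rw [hF'] at hU
  refine le_trans ?_ hU
  have a1 := FF_lw_mono (u := u) Q hnm
  have a2 := FF_lw_mono (u := u) Q (show i - k ≤ i by omega)
  have a3 : 0 ≤ LP Λ u (i - k) (i - k + p) := by
    unfold LP; split_ifs
    · exact le_rfl
    · positivity
  have a4 : 0 ≤ Λ ^ (min (u (i - k + m)) (u (i - k + p + m))) := by positivity
  have a5 : 0 ≤ 1 / (Λ - 1) := div_nonneg zero_le_one (by linarith)
  have a6 := mul_nonneg Q.kap_pos.le (add_nonneg a3 a4)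
  unfold Phi
  linarith

/-- The letter `D` occurs. -/
theorem exists_top (S : St D u P) : ∃ x, u x = D := by
  have : ∀ k ≤ D, ∃ x, u x = k := by
    intro k
    induction k with
    | zero => intro _; exact ⟨0, S.u0⟩
    | succ k ih =>
      intro hk
      obtain ⟨x, hx⟩ := ih (by omega)
      exact ⟨P x + 1, by rw [S.lt1 x (by omega), hx]⟩
  exact this D le_rfl

theorem lower (Q : Par Λ D) (S : St D u P) (N : ℕ) :
    ∃ i j n, MP u i j n ∧ N < j - i ∧
      Phi Λ u i j n = (FF (lw Λ) u j - FF (lw Λ) u i) / (3 - Λ) := by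
  induction N with
  | zero =>
    obtain ⟨x, hx⟩ := exists_top S
    have hD := S.hD
    have e1 := S.eq1 x hx
    have e2 := S.eq2 x hx
    have e0 := S.z x
    have e3 := S.z (x + 1)
    rw [S.Peq x hx] at e3
    refine ⟨P x + 1, P x + 2, 1, ⟨by omega, ?_, ?_, ?_⟩, by omega, ?_⟩
    · intro t ht
      obtain rfl : t = 0 := by omega
      simp [e1, e2]
    · change u (P x + 2) ≠ u (P x + 3)
      omega
    · intro i' hi' j' hj'
      obtain rfl : i' = P x := by omega
      obtain rfl : j' = P x + 1 := by omega
      omega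
    · unfold Phi LP
      simp only [Nat.add_eq_zero_iff, one_ne_zero, and_false, if_false,
        Nat.add_sub_cancel]
      rw [show P x + 2 - 1 = P x + 1 by rfl, show P x + 1 + 1 = P x + 2 by rfl,
        show P x + 2 + 1 = P x + 3 by rfl, e0, e2, e3, show P x + 2 = P x + 1 + 1 by rfl,
        FF_succ _ _ (P x + 1), e1]
      simp only [zero_le, inf_of_le_left, inf_of_le_right, pow_zero, add_sub_cancel_left]
      rw [Q.top_eq]
      ring
  | succ N ih =>
    obtain ⟨i, j, n, hM, hN, hP⟩ := ih
    obtain ⟨i2, j2, n2, e, hM2, hi2, hj2, hn2, hF, hPhi⟩ := image_step Q S hM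
    refine ⟨i2, j2, n2, hM2, ?_, ?_⟩
    · have := S.mono2 i (j - i)
      rw [show i + (j - i) = j by omega] at this
      omega
    · rw [hPhi, hP, hF]; ring

end

/-! ### Uniform frequencies -/

section

variable {Λ : ℝ} {D : ℕ} {u P : ℕ → ℕ}

/-- Contraction constant. -/
noncomputable def cc (Λ : ℝ) (D : ℕ) : ℝ := 1 / (Λ * lw Λ D)

theorem cc_pos (Q : Par Λ D) : 0 < cc Λ D ∧ cc Λ D < 1 := by
  have h1 := Q.h1
  have h2 := Q.one_le D
  unfold cc
  have h3 : 1 < Λ * lw Λ D := by nlinarith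
  exact ⟨by positivity, by rw [div_lt_one (by linarith)]; exact h3⟩

theorem push_bounds (Q : Par Λ D) {f : ℕ → ℝ} {s r : ℝ}
    (hf : ∀ x ≤ D, s * lw Λ x ≤ f x ∧ f x ≤ r * lw Λ x) :
    ∀ x ≤ D, (s + (f 0 - s) * cc Λ D) * lw Λ x ≤ push Λ D f x ∧
      push Λ D f x ≤ (r - (r - f 0) * cc Λ D) * lw Λ x := by
  intro x hx
  have h1 := Q.h1
  have hΛ : 0 < Λ := by linarith
  have h0 := hf 0 (by omega)
  rw [Q.lw_zero] at h0
  have hD := Q.one_le D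
  have hc : cc Λ D * lw Λ x * Λ ≤ 1 := by
    have h3 : cc Λ D * lw Λ D * Λ = 1 := by
      unfold cc; field_simp
    have h4 := Q.mono hx
    have := (cc_pos Q).1
    rw [← h3]
    gcongr
  have hb : s * (Λ * lw Λ x - 1) ≤ (if x < D then f (x + 1) else 2 * f D) ∧
      (if x < D then f (x + 1) else 2 * f D) ≤ r * (Λ * lw Λ x - 1) := by
    split_ifs with h
    · have := hf (x + 1) (by omega)
      rwa [Q.lw_succ] at this
    · obtain rfl : x = D := by omega
      have h5 := hf x le_rfl
      have h6 := Q.top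
      have h7 : Λ * lw Λ x - 1 = 2 * lw Λ x := by linarith
      rw [h7]
      constructor <;> linarith [h5.1, h5.2]
  unfold push
  generalize (if x < D then f (x + 1) else 2 * f D) = y at hb
  rw [le_div_iff₀ hΛ, div_le_iff₀ hΛ]
  constructor
  · nlinarith [hb.1, mul_le_mul_of_nonneg_left hc (show 0 ≤ f 0 - s by linarith)]
  · nlinarith [hb.2, mul_le_mul_of_nonneg_left hc (show 0 ≤ r - f 0 by linarith)]

theorem freq_aux (Q : Par Λ D) (S : St D u P) (n : ℕ) : ∀ (f : ℕ → ℝ) (s r : ℝ), 0 ≤ s →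
    (∀ x ≤ D, s * lw Λ x ≤ f x ∧ f x ≤ r * lw Λ x) →
    ∃ s' r' C : ℝ, s ≤ s' ∧ s' ≤ r' ∧ r' ≤ r ∧ r' - s' = (1 - cc Λ D) ^ n * (r - s) ∧ 0 ≤ C ∧
      ∀ i j, i ≤ j →
        s' * (FF (lw Λ) u j - FF (lw Λ) u i) - C ≤ FF f u j - FF f u i ∧
        FF f u j - FF f u i ≤ r' * (FF (lw Λ) u j - FF (lw Λ) u i) + C := by
  have hΛ := Q.h1
  induction n with
  | zero =>
    intro f s r hs hf
    have h0 := hf 0 (by omega)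
    rw [Q.lw_zero] at h0
    refine ⟨s, r, 0, le_rfl, by linarith, le_rfl, by simp, le_rfl, ?_⟩
    intro i j hij
    obtain ⟨k, rfl⟩ := Nat.exists_eq_add_of_le hij
    clear hij
    induction k with
    | zero => simp
    | succ k ih =>
      rw [← add_assoc, FF_succ, FF_succ]
      have := hf _ (S.le (i + k))
      constructor <;> linarith [ih.1, ih.2]
  | succ n ih =>
    intro f s r hs hf
    have h0 := hf 0 (by omega)
    rw [Q.lw_zero] at h0
    obtain ⟨c0, c1⟩ := cc_pos Q
    have e1 : s ≤ s + (f 0 - s) * cc Λ D := by nlinarith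
    have e2 : r - (r - f 0) * cc Λ D ≤ r := by nlinarith
    obtain ⟨s', r', C, a1, a2, a3, a4, a5, a6⟩ :=
      ih (push Λ D f) _ _ (by linarith) (push_bounds Q hf)
    refine ⟨s', r', Λ * C + 12 * (r * lw Λ D), by linarith, a2, by linarith, ?_, ?_, ?_⟩
    · rw [a4, pow_succ]; ring
    · have : 0 ≤ r := by linarith
      have := Q.one_le D
      positivity
    intro i j hij
    have hD1 := Q.one_le D
    have hr0 : 0 ≤ r := by linarith
    have bnd : ∀ x, ∃ m, (∀ y, x ≤ y → ∃ m', m ≤ m' ∧ P m' ≤ y ∧ y < P (m' + 1)) ∧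
        (P m ≤ x ∧ x < P (m + 1)) := by
      intro x
      obtain ⟨m, h3, h4⟩ := S.block x
      refine ⟨m, fun y hy => ?_, h3, h4⟩
      obtain ⟨m', h5, h6⟩ := S.block y
      refine ⟨m', ?_, h5, h6⟩
      have := S.lt_iff.mp (show P m < P (m' + 1) by omega)
      omega
    have close : ∀ x m, P m ≤ x → x < P (m + 1) →
        (FF f u (P m) ≤ FF f u x ∧ FF f u x ≤ FF f u (P m) + 3 * (r * lw Λ D)) ∧
        (FF (lw Λ) u (P m) ≤ FF (lw Λ) u x ∧
          FF (lw Λ) u x ≤ FF (lw Λ) u (P m) + 3 * lw Λ D) := by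
      intro x m h3 h4
      obtain ⟨k, rfl⟩ := Nat.exists_eq_add_of_le h3
      have hk : k ≤ 3 := by have := S.step m; omega
      have hk' : (k : ℝ) ≤ 3 := by exact_mod_cast hk
      have b1 := FF_bound (f := f) (u := u) (K := r * lw Λ D)
        (fun m => by
          have := (hf _ (S.le m)).1
          have := Q.one_le (u m)
          nlinarith)
        (fun m => by
          have h5 := (hf _ (S.le m)).2
          have h6 := mul_le_mul_of_nonneg_left (Q.mono (S.le m)) hr0
          linarith) (P m) k
      have b2 := FF_bound (f := lw Λ) (u := u) (K := lw Λ D)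
        (fun m => by
          have := Q.one_le (u m)
          linarith)
        (fun m => Q.mono (S.le m)) (P m) k
      have b3 : (k : ℝ) * (r * lw Λ D) ≤ 3 * (r * lw Λ D) :=
        mul_le_mul_of_nonneg_right hk' (mul_nonneg hr0 (by linarith))
      have b4 : (k : ℝ) * lw Λ D ≤ 3 * lw Λ D :=
        mul_le_mul_of_nonneg_right hk' (by linarith)
      exact ⟨⟨b1.1, by linarith [b1.2]⟩, ⟨b2.1, by linarith [b2.2]⟩⟩
    obtain ⟨m, hm, h3, h4⟩ := bnd i
    obtain ⟨m', hmm, h5, h6⟩ := hm j hij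
    obtain ⟨⟨p1, p2⟩, ⟨p3, p4⟩⟩ := close i m h3 h4
    obtain ⟨⟨q1, q2⟩, ⟨q3, q4⟩⟩ := close j m' h5 h6
    obtain ⟨g1, g2⟩ := a6 m m' hmm
    have g1' := mul_le_mul_of_nonneg_left g1 (show 0 ≤ Λ by linarith)
    have g2' := mul_le_mul_of_nonneg_left g2 (show 0 ≤ Λ by linarith)
    rw [FF_push Q S f] at p1 p2 q1 q2
    have hs' : 0 ≤ s' := by linarith
    have hr' : 0 ≤ r' := by linarith
    have hrr : r' ≤ r := by linarith
    have t1 : s' * (FF (lw Λ) u j - FF (lw Λ) u i)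
        ≤ s' * (Λ * (FF (lw Λ) u m' - FF (lw Λ) u m) + 3 * lw Λ D) :=
      mul_le_mul_of_nonneg_left (by rw [LL_P Q S] at p3 q4; linarith) hs'
    have t2 : r' * (Λ * (FF (lw Λ) u m' - FF (lw Λ) u m) - 3 * lw Λ D)
        ≤ r' * (FF (lw Λ) u j - FF (lw Λ) u i) :=
      mul_le_mul_of_nonneg_left (by rw [LL_P Q S] at p4 q3; linarith) hr'
    have t3 : s' * lw Λ D ≤ r * lw Λ D := mul_le_mul_of_nonneg_right (by linarith) (by linarith)
    have t4 : r' * lw Λ D ≤ r * lw Λ D := mul_le_mul_of_nonneg_right (by linarith) (by linarith)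
    have t5 : 0 ≤ r * lw Λ D := mul_nonneg hr0 (by linarith)
    constructor <;> linarith

theorem freq (Q : Par Λ D) (S : St D u P) {ε : ℝ} (hε : 0 < ε) :
    ∃ s r C : ℝ, 1 / lw Λ D ≤ s ∧ s ≤ r ∧ r ≤ 1 ∧ r - s ≤ ε ∧ 0 ≤ C ∧
      ∀ i k : ℕ,
        s * (FF (lw Λ) u (i + k) - FF (lw Λ) u i) - C ≤ k ∧
        k ≤ r * (FF (lw Λ) u (i + k) - FF (lw Λ) u i) + C := by
  obtain ⟨c0, c1⟩ := cc_pos Q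
  obtain ⟨n, hn⟩ := exists_pow_lt_of_lt_one hε (show 1 - cc Λ D < 1 by linarith)
  have hD := Q.one_le D
  have hD0 : 0 < 1 / lw Λ D := by positivity
  obtain ⟨s, r, C, a1, a2, a3, a4, a5, a6⟩ := freq_aux Q S n (fun _ => 1) (1 / lw Λ D) 1 hD0.le
    (by
      intro x hx
      constructor
      · have := Q.mono hx
        rw [div_mul_eq_mul_div, one_mul, div_le_one (by linarith)]
        exact this
      · rw [one_mul]; exact Q.one_le x)
  refine ⟨s, r, C, a1, a2, a3, ?_, a5, ?_⟩
  · rw [a4]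
    have : (0 : ℝ) ≤ (1 - cc Λ D) ^ n := pow_nonneg (by linarith) n
    nlinarith
  · intro i k
    have := a6 i (i + k) (by omega)
    simp only [FF, Finset.sum_const, Finset.card_range, nsmul_eq_mul, mul_one] at this
    push_cast at this
    simp only [add_sub_cancel_left] at this
    exact this

end

/-! ### Fractional powers as repetitions -/

theorem flatten_replicate_get (v : List ℕ) (hv : 0 < v.length) : ∀ k t, t < k * v.length →
    ((List.replicate k v).flatten)[t]? = v[t % v.length]? := by
  intro k
  induction k with
  | zero => intro t ht; simp at ht
  | succ k ih =>
    intro t ht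
    rw [List.replicate_succ, List.flatten_cons]
    by_cases h : t < v.length
    · rw [List.getElem?_append_left h, Nat.mod_eq_of_lt h]
    · rw [List.getElem?_append_right (by omega), ih _ (by rw [Nat.succ_mul] at ht; omega),
        ← Nat.mod_eq_sub_mod (a := t) (by omega)]

theorem powPref_length (v : List ℕ) (hv : 0 < v.length) (k : ℕ) : (powPref v k).length = k := by
  unfold powPref
  simp
  exact Nat.le_mul_of_pos_right k hv

theorem occurs_powPref (v : List ℕ) (hv : 0 < v.length) (k : ℕ) (u : ℕ → ℕ) (j : ℕ) :
    OccursAt (powPref v k) u j ↔ ∀ t < k, v[t % v.length]? = some (u (j + t)) := by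
  unfold OccursAt
  have hl := powPref_length v hv k
  have hg : ∀ t < k, (powPref v k)[t]? = v[t % v.length]? := by
    intro t ht
    unfold powPref
    rw [List.getElem?_take_of_lt ht]
    exact flatten_replicate_get v hv k t (lt_of_lt_of_le ht (Nat.le_mul_of_pos_right k hv))
  rw [hl]
  constructor
  · intro h t ht
    rw [← hg t ht, h]
    simp [ht]
  · intro h
    apply List.ext_getElem?
    intro t
    by_cases ht : t < k
    · rw [hg t ht, h t ht]; simp [ht]
    · rw [List.getElem?_eq_none (by omega), List.getElem?_eq_none (by simp; omega)]

theorem expSet_match {u : ℕ → ℕ} {N : ℕ} {x : ℝ} (h : x ∈ expSet u N) :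
    x ≤ 1 ∨ ∃ i p n : ℕ, 0 < p ∧ N ≤ p ∧ (∀ t < n, u (i + t) = u (i + p + t)) ∧
      x = 1 + (n : ℝ) / p := by
  obtain ⟨v, k, hv, hN, ⟨j, hj⟩, rfl⟩ := h
  have hv' : 0 < v.length := List.length_pos_iff.mpr hv
  have hvr : (0 : ℝ) < v.length := by exact_mod_cast hv'
  rcases Nat.le_total k v.length with hk | hk
  · left
    rw [div_le_one hvr]
    exact_mod_cast hk
  · right
    rw [occurs_powPref v hv'] at hj
    refine ⟨j, v.length, k - v.length, hv', hN, ?_, ?_⟩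
    · intro t ht
      have h1 := hj t (by omega)
      have h2 := hj (v.length + t) (by omega)
      rw [Nat.add_mod_left, h1] at h2
      have h3 := Option.some.inj h2
      rw [h3, add_assoc]
    · rw [Nat.cast_sub hk]
      field_simp
      ring

theorem match_expSet {u : ℕ → ℕ} {i p n : ℕ} (hp : 0 < p)
    (h : ∀ t < n, u (i + t) = u (i + p + t)) : (1 + (n : ℝ) / p) ∈ expSet u p := by
  have hpr : (0 : ℝ) < p := by exact_mod_cast hp
  have key : ∀ t < p + n, u (i + t % p) = u (i + t) := by
    intro t
    induction t using Nat.strong_induction_on with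
    | _ t ih =>
      intro ht
      by_cases hc : t < p
      · rw [Nat.mod_eq_of_lt hc]
      · rw [Nat.mod_eq_sub_mod (by omega), ih (t - p) (by omega) (by omega),
          h (t - p) (by omega), show i + p + (t - p) = i + t by omega]
  have hlen : ((List.range p).map fun t => u (i + t)).length = p := by simp
  refine ⟨(List.range p).map fun t => u (i + t), p + n, ?_, by rw [hlen], ⟨i, ?_⟩, ?_⟩
  · intro h0
    rw [h0] at hlen
    simp at hlen
    omega
  · rw [occurs_powPref _ (by rw [hlen]; exact hp)]
    intro t ht
    rw [hlen, ← key t ht]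
    simp [Nat.mod_lt t hp]
  · rw [hlen]
    push_cast
    field_simp

section

variable {Λ : ℝ} {D : ℕ} {u P : ℕ → ℕ}

theorem exp_bounded (Q : Par Λ D) (S : St D u P) {x : ℝ} (hx : x ∈ expSet u 0) :
    x ≤ 1 + lw Λ D / (3 - Λ) := by
  have h2 := Q.h2
  have hD := Q.one_le D
  have h3 : 0 ≤ lw Λ D / (3 - Λ) := div_nonneg (by linarith) (by linarith)
  rcases expSet_match hx with h | ⟨i, p, n, hp, -, hm, rfl⟩
  · linarith
  · have hpr : (0 : ℝ) < p := by exact_mod_cast hp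
    have hU := upper_any Q S hp hm
    have b1 := (FF_bound (f := lw Λ) (u := u) (K := lw Λ D)
        (fun m => by
          have := Q.one_le (u m)
          linarith)
        (fun m => Q.mono (S.le m)) i p).2
    have b2 : (n : ℝ) ≤ FF (lw Λ) u (i + n) - FF (lw Λ) u i := by
      clear hU hm hx
      induction n with
      | zero => simp
      | succ n ih =>
        rw [← add_assoc, FF_succ]
        have := Q.one_le (u (i + n))
        push_cast
        linarith
    have b3 : (FF (lw Λ) u (i + p) - FF (lw Λ) u i) / (3 - Λ) ≤ (p * lw Λ D) / (3 - Λ) :=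
      div_le_div_of_nonneg_right (by linarith) (by linarith)
    have b4 : (n : ℝ) / p ≤ lw Λ D / (3 - Λ) := by
      rw [div_le_iff₀ hpr]
      have : (p * lw Λ D) / (3 - Λ) = lw Λ D / (3 - Λ) * p := by ring
      linarith
    linarith

theorem upper_asym (Q : Par Λ D) (S : St D u P) {x : ℝ} (hx : 1 + 1 / (3 - Λ) < x) :
    ∃ N, ∀ y ∈ expSet u N, y ≤ x := by
  have h2 := Q.h2
  have hD := Q.one_le D
  obtain ⟨g, hg⟩ : ∃ g, g = 1 / (3 - Λ) := ⟨_, rfl⟩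
  have hg0 : 0 < g := by rw [hg]; exact div_pos one_pos (by linarith)
  rw [← hg] at hx
  obtain ⟨η, hη⟩ : ∃ η, η = x - 1 - g := ⟨_, rfl⟩
  have hη0 : 0 < η := by linarith
  have hs0 : 0 < 1 / lw Λ D := by positivity
  obtain ⟨s0, hs0e⟩ : ∃ s0, s0 = 1 / lw Λ D := ⟨_, rfl⟩
  rw [← hs0e] at hs0
  obtain ⟨s, r, C, a1, a2, a3, a4, a5, a6⟩ := freq Q S (show 0 < η * s0 / (2 * g) by positivity)
  rw [← hs0e] at a1
  have hs : 0 < s := by linarith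
  obtain ⟨N, hN⟩ := exists_nat_gt (2 * C * (g + η / 2 + 1) / η)
  refine ⟨N, fun y hy => ?_⟩
  rcases expSet_match hy with h | ⟨i, p, n, hp, hNp, hm, rfl⟩
  · linarith
  have hpr : (0 : ℝ) < p := by exact_mod_cast hp
  have hU := upper_any Q S hp hm
  have hU' : FF (lw Λ) u (i + n) - FF (lw Λ) u i
      ≤ g * (FF (lw Λ) u (i + p) - FF (lw Λ) u i) := by
    rw [hg]; rw [one_div_mul_eq_div]; exact hU
  have f1 := (a6 i n).2
  have f2 := (a6 i p).1
  generalize FF (lw Λ) u (i + n) - FF (lw Λ) u i = W at hU' f1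
  generalize FF (lw Λ) u (i + p) - FF (lw Λ) u i = V at hU' f2
  have k1 : g * (r - s) ≤ η / 2 * s := by
    have : g * (r - s) ≤ g * (η * s0 / (2 * g)) := mul_le_mul_of_nonneg_left a4 hg0.le
    have e : g * (η * s0 / (2 * g)) = η / 2 * s0 := by field_simp
    rw [e] at this
    have := mul_le_mul_of_nonneg_left a1 (show 0 ≤ η / 2 by linarith)
    linarith
  have hpN : (2 * C * (g + η / 2 + 1) / η) < p :=
    hN.trans_le (by exact_mod_cast hNp)
  rw [div_lt_iff₀ hη0] at hpN
  have k2 : V ≤ (p + C) / s := by rw [le_div_iff₀ hs]; linarith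
  have k3 : r * W ≤ g * r * ((p + C) / s) := by
    have hr : 0 ≤ r := by linarith
    calc r * W ≤ r * (g * V) := mul_le_mul_of_nonneg_left hU' hr
      _ = g * r * V := by ring
      _ ≤ _ := mul_le_mul_of_nonneg_left k2 (by positivity)
  have k4 : g * r * ((p + C) / s) ≤ (g + η / 2) * (p + C) := by
    rw [← mul_div_assoc, div_le_iff₀ hs]
    have : (g * r) * (p + C) ≤ ((g + η / 2) * s) * (p + C) :=
      mul_le_mul_of_nonneg_right (by linarith) (by linarith)
    linarith
  have k5 : (n : ℝ) / p ≤ g + η := by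
    rw [div_le_iff₀ hpr]
    linarith
  linarith

theorem lower_asym (Q : Par Λ D) (S : St D u P) {x : ℝ} (hx : x < 1 + 1 / (3 - Λ)) (N : ℕ) :
    ∃ y ∈ expSet u N, x ≤ y := by
  have h1 := Q.h1
  have h2 := Q.h2
  have hD := Q.one_le D
  obtain ⟨g, hg⟩ : ∃ g, g = 1 / (3 - Λ) := ⟨_, rfl⟩
  have hg0 : 0 < g := by rw [hg]; exact div_pos one_pos (by linarith)
  rw [← hg] at hx
  obtain ⟨η, hη⟩ : ∃ η, η = 1 + g - x := ⟨_, rfl⟩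
  have hη0 : 0 < η := by linarith
  have hs0 : 0 < 1 / lw Λ D := by positivity
  obtain ⟨s0, hs0e⟩ : ∃ s0, s0 = 1 / lw Λ D := ⟨_, rfl⟩
  rw [← hs0e] at hs0
  obtain ⟨s, r, C, a1, a2, a3, a4, a5, a6⟩ := freq Q S (show 0 < η * s0 / (2 * g) by positivity)
  rw [← hs0e] at a1
  have hs : 0 < s := by linarith
  have hr : 0 < r := by linarith
  obtain ⟨K, hK⟩ : ∃ K, K = 1 / (Λ - 1) + kap Λ * (Λ ^ D + Λ ^ D) := ⟨_, rfl⟩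
  have hkp := Q.kap_pos
  have hK0 : 0 ≤ K := by
    have : 0 ≤ 1 / (Λ - 1) := div_nonneg zero_le_one (by linarith)
    have : 0 ≤ Λ ^ D := by positivity
    rw [hK]; positivity
  obtain ⟨N1, hN1⟩ := exists_nat_gt (2 * (C * g + K + C) / η)
  obtain ⟨N2, hN2⟩ := exists_nat_gt C
  obtain ⟨i, j, n, hM, hNp, hPhi⟩ := lower Q S (N + N1 + N2)
  obtain ⟨p, rfl⟩ := Nat.exists_eq_add_of_le (Nat.le_of_lt hM.lt)
  have hNp' : N + N1 + N2 < p := by omega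
  have hp : 0 < p := by omega
  have hpr : (0 : ℝ) < p := by exact_mod_cast hp
  have hmem := match_expSet hp hM.eq
  refine ⟨1 + (n : ℝ) / p, ?_, ?_⟩
  · obtain ⟨v, k, q1, q2, q3, q4⟩ := hmem
    exact ⟨v, k, q1, by omega, q3, q4⟩
  have hU : g * (FF (lw Λ) u (i + p) - FF (lw Λ) u i)
      ≤ FF (lw Λ) u (i + n) - FF (lw Λ) u i + K := by
    rw [hg, one_div_mul_eq_div, ← hPhi, hK]
    unfold Phi
    have l1 : LP Λ u i (i + p) ≤ Λ ^ D := by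
      unfold LP; split_ifs
      · positivity
      · exact pow_le_pow_right₀ (by linarith) ((min_le_left _ _).trans (S.le _))
    have l2 : Λ ^ (min (u (i + n)) (u (i + p + n))) ≤ Λ ^ D :=
      pow_le_pow_right₀ (by linarith) ((min_le_left _ _).trans (S.le _))
    have := mul_le_mul_of_nonneg_left (add_le_add l1 l2) hkp.le
    linarith
  have f1 := (a6 i n).1
  have f2 := (a6 i p).2
  generalize FF (lw Λ) u (i + n) - FF (lw Λ) u i = W at hU f1
  generalize FF (lw Λ) u (i + p) - FF (lw Λ) u i = V at hU f2
  have k1 : g * (r - s) ≤ η / 2 * r := by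
    have : g * (r - s) ≤ g * (η * s0 / (2 * g)) := mul_le_mul_of_nonneg_left a4 hg0.le
    have e : g * (η * s0 / (2 * g)) = η / 2 * s0 := by field_simp
    rw [e] at this
    have := mul_le_mul_of_nonneg_left (a1.trans a2) (show 0 ≤ η / 2 by linarith)
    linarith
  have hpN : (2 * (C * g + K + C) / η) < p :=
    hN1.trans_le (by exact_mod_cast (by omega : N1 ≤ p))
  have hpC : C < p := hN2.trans_le (by exact_mod_cast (by omega : N2 ≤ p))
  rw [div_lt_iff₀ hη0] at hpN
  have k2 : (p - C) / r ≤ V := by rw [div_le_iff₀ hr]; linarith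
  have k3 : g * s * ((p - C) / r) ≤ s * W + K := by
    calc g * s * ((p - C) / r) ≤ g * s * V := mul_le_mul_of_nonneg_left k2 (by positivity)
      _ = s * (g * V) := by ring
      _ ≤ s * (W + K) := mul_le_mul_of_nonneg_left hU hs.le
      _ ≤ _ := by nlinarith
  have k4 : (g - η / 2) * (p - C) ≤ g * s * ((p - C) / r) := by
    rw [← mul_div_assoc, le_div_iff₀ hr]
    have : ((g - η / 2) * r) * (p - C) ≤ (g * s) * (p - C) :=
      mul_le_mul_of_nonneg_right (by linarith) (by linarith)
    linarith
  have k5 : g - η ≤ (n : ℝ) / p := by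
    rw [le_div_iff₀ hpr]
    have : 0 ≤ η * C := by positivity
    linarith
  linarith

end

/-- For `d ≥ 3`, the asymptotic critical exponent of the fixed point `u_d`
of `φ_d` equals `1 + 1/(3 - Λ_d)`, where `Λ_d` is the unique real in `(2,3)` with
`Λ_d^(d-1)·(Λ_d-2)^2 = 1` (the spectral radius of the incidence matrix of `φ_d`). -/
theorem statement2 (d : ℕ) (hd : 3 ≤ d) (u : ℕ → ℕ) (hu : IsPhiFixed d u)
    (Λ : ℝ) (hΛ1 : 2 < Λ) (hΛ2 : Λ < 3) (hΛ : Λ ^ (d - 1) * (Λ - 2) ^ 2 = 1) :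
    acritExp u = ((1 + 1 / (3 - Λ) : ℝ) : EReal) := by
  obtain ⟨P, S⟩ := exists_St d hd u hu
  have Q : Par Λ (d - 1) := ⟨hΛ1, hΛ2, hΛ⟩
  have hcrit : critExp u ≠ ⊤ := by
    have : critExp u ≤ ((1 + lw Λ (d - 1) / (3 - Λ) : ℝ) : EReal) := by
      refine sSup_le ?_
      rintro _ ⟨x, hx, rfl⟩
      exact EReal.coe_le_coe_iff.mpr (exp_bounded Q S hx)
    exact ne_top_of_le_ne_top (EReal.coe_ne_top _) this
  unfold acritExp
  rw [if_neg hcrit]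
  apply le_antisymm
  · refine EReal.le_of_forall_lt_iff_le.mp ?_
    intro x hx
    obtain ⟨N, hN⟩ := upper_asym Q S (EReal.coe_lt_coe_iff.mp hx)
    refine (iInf_le _ N).trans (sSup_le ?_)
    rintro _ ⟨y, hy, rfl⟩
    exact EReal.coe_le_coe_iff.mpr (hN y hy)
  · refine le_iInf fun N => ?_
    refine EReal.ge_of_forall_gt_iff_ge.mp ?_
    intro x hx
    obtain ⟨y, hy, hxy⟩ := lower_asym Q S (EReal.coe_lt_coe_iff.mp hx) N
    exact (EReal.coe_le_coe_iff.mpr hxy).trans (le_sSup ⟨y, hy, rfl⟩)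

end RichRT
end

section
/- For every integer d ≥ 3, all bispecial factors of the fixed point u_d of φ_d are ordinary: every bispecial factor w of u_d has bilateral order b(w) = #Bext(w) − #Lext(w) − #Rext(w) + 1 = 0. -/
namespace RichRT

variable {A : Type*}

theorem occ_cons (x : ℕ) (w : List ℕ) (u : ℕ → ℕ) (q : ℕ) :
    OccursAt (x :: w) u q ↔ u q = x ∧ OccursAt w u (q + 1) := by
  unfold OccursAt
  rw [List.length_cons, List.range_succ_eq_map, List.map_cons, List.map_map, List.cons.injEq]
  have : ((fun t => u (q + t)) ∘ Nat.succ) = fun t => u (q + 1 + t) := by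
    funext t; simp only [Function.comp]; congr 1; omega
  rw [this]
  constructor
  · rintro ⟨h, h'⟩; exact ⟨h.symm, h'⟩
  · rintro ⟨h, h'⟩; exact ⟨h.symm, h'⟩

theorem occ_nil (u : ℕ → ℕ) (q : ℕ) : OccursAt [] u q := by simp [OccursAt]

theorem occ_append (x y : List ℕ) (u : ℕ → ℕ) (q : ℕ) :
    OccursAt (x ++ y) u q ↔ OccursAt x u q ∧ OccursAt y u (q + x.length) := by
  induction x generalizing q with
  | nil => simp [occ_nil]
  | cons a x ih =>
    rw [List.cons_append, occ_cons, occ_cons, ih, List.length_cons, and_assoc]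
    have : q + 1 + x.length = q + (x.length + 1) := by omega
    rw [this]

theorem occ_seg (u : ℕ → ℕ) (q m : ℕ) : OccursAt ((List.range m).map fun t => u (q + t)) u q := by
  simp [OccursAt]

/-- The basic positional facts about the fixed point; `P n` is the start of the `n`-th block. -/
structure Fx (D : ℕ) (u P : ℕ → ℕ) : Prop where
  hD : 2 ≤ D
  u0 : u 0 = 0
  p0 : P 0 = 0
  z : ∀ n, u (P n) = 0
  one : ∀ n, u (P n + 1) = min (u n + 1) D
  two : ∀ n, u n < D → P (n + 1) = P n + 2
  three : ∀ n, u n = D → P (n + 1) = P n + 3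
  three' : ∀ n, u n = D → u (P n + 2) = D
  le : ∀ n, u n ≤ D

theorem blocks_aux (D : ℕ) (u P : ℕ → ℕ) (p0 : P 0 = 0)
    (two : ∀ n, u n < D → P (n + 1) = P n + 2)
    (three : ∀ n, D ≤ u n → P (n + 1) = P n + 3) (q : ℕ) :
    ∃ n, q = P n ∨ q = P n + 1 ∨ (q = P n + 2 ∧ D ≤ u n) := by
  induction q with
  | zero => exact ⟨0, Or.inl p0.symm⟩
  | succ q ih =>
    obtain ⟨n, h | h | ⟨h, h'⟩⟩ := ih
    · exact ⟨n, by omega⟩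
    · by_cases hn : u n < D
      · exact ⟨n + 1, by have := two n hn; omega⟩
      · exact ⟨n, by omega⟩
    · exact ⟨n + 1, by have := three n h'; omega⟩

theorem mkFx (D : ℕ) (hD : 2 ≤ D) (u : ℕ → ℕ) (hu : IsPhiFixed (D + 1) u) :
    ∃ P, Fx D u P := by
  obtain ⟨h0, h⟩ := hu
  set P : ℕ → ℕ := fun n => (phiW (D + 1) ((List.range n).map u)).length with hP
  have hocc : ∀ n, OccursAt (phiL (D + 1) (u n)) u (P n) := by
    intro n
    have := h (n + 1)
    rw [List.range_succ, List.map_append, phiW, List.flatMap_append, occ_append] at this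
    have := this.2
    simpa [hP, phiW] using this
  have hs : ∀ n, P (n + 1) = P n + (phiL (D + 1) (u n)).length := by
    intro n
    simp [hP, List.range_succ, phiW]
  have p0 : P 0 = 0 := by simp [hP, phiW]
  have z : ∀ n, u (P n) = 0 := by
    intro n
    have := hocc n
    unfold phiL at this
    split_ifs at this <;> exact ((occ_cons _ _ _ _).1 this).1
  have one : ∀ n, u (P n + 1) = min (u n + 1) D := by
    intro n
    have := hocc n
    unfold phiL at this
    split_ifs at this with hh <;> simp only [occ_cons] at this <;> omega
  have two : ∀ n, u n < D → P (n + 1) = P n + 2 := by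
    intro n hn
    rw [hs]
    simp [phiL, hn]
  have three : ∀ n, D ≤ u n → P (n + 1) = P n + 3 := by
    intro n hn
    rw [hs]
    simp [phiL, Nat.not_lt.2 hn]
  have three' : ∀ n, D ≤ u n → u (P n + 2) = D := by
    intro n hn
    have := hocc n
    simp only [phiL, Nat.add_sub_cancel, Nat.not_lt.2 hn, if_false, occ_cons] at this
    exact this.2.2.1
  refine ⟨P, hD, h0, p0, z, one, two, fun n hn => three n hn.ge, fun n hn => three' n hn.ge, ?_⟩
  intro q
  obtain ⟨n, rfl | rfl | ⟨rfl, h'⟩⟩ := blocks_aux D u P p0 two three q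
  · rw [z]; omega
  · rw [one]; omega
  · rw [three' n h']

theorem Fx.blocks {D : ℕ} {u P : ℕ → ℕ} (F : Fx D u P) (q : ℕ) :
    ∃ n, q = P n ∨ q = P n + 1 ∨ (q = P n + 2 ∧ u n = D) := by
  obtain ⟨n, hn⟩ := blocks_aux D u P F.p0 F.two
    (fun n hn => F.three n (le_antisymm (F.le n) hn)) q
  have := F.le n
  exact ⟨n, by omega⟩

theorem Fx.zero {D : ℕ} {u P : ℕ → ℕ} (F : Fx D u P) (q : ℕ) (h : u q = 0) : ∃ n, q = P n := by
  have hD := F.hD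
  obtain ⟨n, h1 | h1 | ⟨h1, h2⟩⟩ := F.blocks q
  · exact ⟨n, h1⟩
  · subst h1; rw [F.one] at h; omega
  · subst h1; rw [F.three' n h2] at h; omega

theorem Fx.mono {D : ℕ} {u P : ℕ → ℕ} (F : Fx D u P) : StrictMono P := by
  apply strictMono_nat_of_lt_succ
  intro n
  rcases (F.le n).lt_or_eq with h | h
  · have := F.two n h; omega
  · have := F.three n h; omega

theorem Fx.succ_ge {D : ℕ} {u P : ℕ → ℕ} (F : Fx D u P) (n : ℕ) : P n + 2 ≤ P (n + 1) := by
  rcases (F.le n).lt_or_eq with h | h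
  · have := F.two n h; omega
  · have := F.three n h; omega

theorem Fx.ge {D : ℕ} {u P : ℕ → ℕ} (F : Fx D u P) (n : ℕ) : 2 * n ≤ P n := by
  induction n with
  | zero => omega
  | succ n ih => have := F.succ_ge n; omega

/-- Synchronisation, forward. -/
theorem Fx.sync1 {D : ℕ} {u P : ℕ → ℕ} (F : Fx D u P) (v : List ℕ) (n : ℕ)
    (h : OccursAt v u n) :
    OccursAt (phiW (D + 1) v) u (P n) ∧ P n + (phiW (D + 1) v).length = P (n + v.length) := by
  induction v generalizing n with
  | nil => simp [phiW, occ_nil]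
  | cons x v ih =>
    rw [occ_cons] at h
    obtain ⟨hx, hv⟩ := h
    obtain ⟨h1, h2⟩ := ih (n + 1) hv
    have e : phiW (D + 1) (x :: v) = phiL (D + 1) x ++ phiW (D + 1) v := by simp [phiW]
    have e2 : n + (x :: v).length = n + 1 + v.length := by simp; omega
    rw [e, occ_append, List.length_append, e2, ← h2]
    have hz := F.z n
    have ho := F.one n
    rcases (F.le n).lt_or_eq with h | h
    · have h2' := F.two n h
      have : phiL (D + 1) x = [0, x + 1] := by simp [phiL]; omega
      rw [this]
      simp only [occ_cons, occ_nil, List.length_cons, List.length_nil]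
      rw [h2'] at h1 ⊢
      refine ⟨⟨⟨hz, by omega, trivial⟩, by simpa using h1⟩, by omega⟩
    · have h2' := F.three n h
      have h3 := F.three' n h
      have : phiL (D + 1) x = [0, D, D] := by simp [phiL]; omega
      rw [this]
      simp only [occ_cons, occ_nil, List.length_cons, List.length_nil]
      rw [h2'] at h1 ⊢
      refine ⟨⟨⟨hz, by omega, by rw [← h3], trivial⟩, by simpa using h1⟩, by omega⟩

/-- Synchronisation, backward. -/
theorem Fx.sync2 {D : ℕ} {u P : ℕ → ℕ} (F : Fx D u P) (v : List ℕ) (hv : ∀ x ∈ v, x ≤ D) (n : ℕ)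
    (h : OccursAt (phiW (D + 1) v ++ [0]) u (P n)) : OccursAt v u n := by
  induction v generalizing n with
  | nil => exact occ_nil _ _
  | cons x v ih =>
    have e : phiW (D + 1) (x :: v) = phiL (D + 1) x ++ phiW (D + 1) v := by simp [phiW]
    have hD := F.hD
    rw [e, List.append_assoc, occ_append] at h
    obtain ⟨h1, h2⟩ := h
    have ho := F.one n
    have hx : x ≤ D := hv x (by simp)
    -- first letter of the remainder is zero
    have hh : u (P n + (phiL (D + 1) x).length) = 0 := by
      cases v with
      | nil => simp only [phiW, List.flatMap_nil, List.nil_append, occ_cons] at h2; exact h2.1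
      | cons y v =>
        have : ∃ l, phiW (D + 1) (y :: v) ++ [0] = 0 :: l := by
          simp only [phiW, List.flatMap_cons, phiL]; split_ifs <;> simp
        obtain ⟨l, hl⟩ := this
        rw [hl, occ_cons] at h2; exact h2.1
    rw [occ_cons]
    have key : u n = x ∧ P (n + 1) = P n + (phiL (D + 1) x).length := by
      rcases hx.lt_or_eq with h | h
      · have e2 : phiL (D + 1) x = [0, x + 1] := by simp [phiL, h]
        rw [e2] at h1 hh ⊢
        simp only [occ_cons, List.length_cons, List.length_nil] at h1 hh ⊢
        have : u n ≠ D := by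
          intro hn
          have := F.three' n hn
          simp at hh; omega
        have h3 := F.le n
        have h4 := F.two n (by omega)
        refine ⟨?_, by omega⟩
        have := h1.2.1
        omega
      · have e2 : phiL (D + 1) x = [0, D, D] := by simp [phiL]; omega
        rw [e2] at h1 hh ⊢
        simp only [occ_cons, List.length_cons, List.length_nil] at h1 hh ⊢
        have h3 := F.le n
        have : ¬ u n < D := by
          intro hn
          have h4 := F.two n hn
          have h5 := F.z (n + 1)
          rw [h4] at h5
          have := h1.2.2.1
          rw [add_assoc] at this
          simp at this; omega
        have h4 := F.three n (by omega)
        exact ⟨by omega, by omega⟩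
    refine ⟨key.1, ih (fun y hy => hv y (by simp [hy])) _ ?_⟩
    rw [key.2]; exact h2

/-- Extension graph. -/
def EG (u : ℕ → ℕ) (w : List ℕ) (i j : ℕ) : Prop :=
  ∃ p, u p = i ∧ OccursAt w u (p + 1) ∧ u (p + 1 + w.length) = j

theorem EG_iff (u : ℕ → ℕ) (w : List ℕ) (i j : ℕ) :
    IsFactorS (i :: (w ++ [j])) u ↔ EG u w i j := by
  unfold IsFactorS EG
  simp only [occ_cons, occ_append, occ_nil, and_true]

def pw (D : ℕ) (a : Bool) : List ℕ := if a then [D] else []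

def rel (D : ℕ) (a : Bool) (i i' : ℕ) : Prop :=
  if a then (i = 0 ∧ i' + 1 = D) ∨ (i = D ∧ i' = D) else i = min (i' + 1) D

theorem Fx.right {D : ℕ} {u P : ℕ → ℕ} (F : Fx D u P) (b : Bool) (m j : ℕ) :
    (OccursAt (pw D b) u (P m + 1) ∧ u (P m + 1 + (pw D b).length) = j) ↔ rel D b j (u m) := by
  have h1 := F.one m
  have h2 := F.two m
  have h3 := F.three' m
  have h4 := F.le m
  have h5 := F.z (m + 1)
  have hD := F.hD
  cases b with
  | false => simp [pw, rel, occ_nil, h1, eq_comm]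
  | true =>
    simp only [pw, rel, if_true, occ_cons, occ_nil, List.length_cons, List.length_nil, and_true]
    have e : P m + 1 + (0 + 1) = P m + 2 := by omega
    rw [e]
    rcases h4.lt_or_eq with h | h
    · rw [h2 h] at h5; omega
    · have := h3 h; omega

theorem Fx.left1 {D : ℕ} {u P : ℕ → ℕ} (F : Fx D u P) (a : Bool) (q m : ℕ)
    (hq : q + 1 + (pw D a).length = P m) (ha : OccursAt (pw D a) u (q + 1)) :
    ∃ n, m = n + 1 ∧ rel D a (u q) (u n) := by
  have hD := F.hD
  cases m with
  | zero => rw [F.p0] at hq; omega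
  | succ n =>
    refine ⟨n, rfl, ?_⟩
    have h1 := F.one n
    have h4 := F.le n
    have hz := F.z n
    cases a with
    | false =>
      simp only [pw, rel, Bool.false_eq_true, if_false, List.length_nil] at *
      rcases h4.lt_or_eq with h | h
      · have := F.two n h
        have : q = P n + 1 := by omega
        rw [this]; exact h1
      · have := F.three n h
        have : q = P n + 2 := by omega
        rw [this, F.three' n h]; omega
    | true =>
      simp only [pw, rel, if_true, occ_cons, occ_nil, List.length_cons, List.length_nil] at *
      rcases h4.lt_or_eq with h | h
      · have := F.two n h
        have : q = P n := by omega
        rw [this] at ha ⊢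
        omega
      · have := F.three n h
        have : q = P n + 1 := by omega
        rw [this]; omega

theorem Fx.left2 {D : ℕ} {u P : ℕ → ℕ} (F : Fx D u P) (a : Bool) (n i : ℕ)
    (h : rel D a i (u n)) :
    ∃ q, q + 1 + (pw D a).length = P (n + 1) ∧ u q = i ∧ OccursAt (pw D a) u (q + 1) := by
  have hD := F.hD
  have h1 := F.one n
  have h4 := F.le n
  have hz := F.z n
  have hs := F.succ_ge n
  refine ⟨P (n + 1) - 1 - (pw D a).length, ?_⟩
  cases a with
  | false =>
    simp only [pw, rel, Bool.false_eq_true, if_false, List.length_nil, occ_nil, and_true] at *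
    refine ⟨by omega, ?_⟩
    rcases h4.lt_or_eq with hh | hh
    · have := F.two n hh
      rw [show P (n + 1) - 1 - 0 = P n + 1 by omega]; omega
    · have := F.three n hh
      rw [show P (n + 1) - 1 - 0 = P n + 2 by omega, F.three' n hh]; omega
  | true =>
    simp only [pw, rel, if_true, List.length_cons, List.length_nil, occ_cons, occ_nil, and_true] at *
    refine ⟨by omega, ?_⟩
    rcases h4.lt_or_eq with hh | hh
    · have := F.two n hh
      rw [show P (n + 1) - 1 - (0 + 1) = P n by omega]; omega
    · have := F.three n hh
      have := F.three' n hh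
      rw [show P (n + 1) - 1 - (0 + 1) = P n + 1 by omega]
      rw [show P n + 1 + 1 = P n + 2 by omega]; omega

def img (D : ℕ) (a b : Bool) (v : List ℕ) : List ℕ :=
  pw D a ++ ((phiW (D + 1) v ++ [0]) ++ pw D b)

theorem Fx.EG_img {D : ℕ} {u P : ℕ → ℕ} (F : Fx D u P) (a b : Bool) (v : List ℕ)
    (hv : ∀ x ∈ v, x ≤ D) (i j : ℕ) :
    EG u (img D a b v) i j ↔ ∃ i' j', EG u v i' j' ∧ rel D a i i' ∧ rel D b j j' := by
  constructor
  · rintro ⟨p, rfl, hw, hj⟩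
    unfold img at hw hj
    rw [occ_append, occ_append] at hw
    obtain ⟨h1, h2, h3⟩ := hw
    have hz : u (p + 1 + (pw D a).length) = 0 := by
      cases v with
      | nil => simp only [phiW, List.flatMap_nil, List.nil_append, occ_cons] at h2; exact h2.1
      | cons y v =>
        have : ∃ l, phiW (D + 1) (y :: v) ++ [0] = 0 :: l := by
          simp only [phiW, List.flatMap_cons, phiL]; split_ifs <;> simp
        obtain ⟨l, hl⟩ := this
        rw [hl, occ_cons] at h2; exact h2.1
    obtain ⟨m, hm⟩ := F.zero _ hz
    obtain ⟨n, rfl, hr⟩ := F.left1 a p m hm h1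
    rw [hm] at h2 h3
    have hocc := F.sync2 v hv _ h2
    have hs := (F.sync1 v _ hocc).2
    refine ⟨u n, u (n + 1 + v.length), ⟨n, rfl, hocc, rfl⟩, hr, ?_⟩
    rw [← F.right]
    rw [← hs]
    constructor
    · rw [List.length_append, List.length_singleton, ← add_assoc] at h3
      exact h3
    · rw [← hj]
      congr 1
      simp only [List.length_append, List.length_singleton]
      omega
  · rintro ⟨i', j', ⟨n, rfl, hocc, rfl⟩, hi, hj⟩
    obtain ⟨q, hq, hu, ho⟩ := F.left2 a n i hi
    obtain ⟨s1, s2⟩ := F.sync1 v _ hocc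
    rw [← F.right, ← s2] at hj
    refine ⟨q, hu, ?_, ?_⟩
    · unfold img
      rw [occ_append, occ_append, occ_append, hq]
      refine ⟨ho, ⟨s1, ?_⟩, ?_⟩
      · rw [s2, occ_cons]; exact ⟨F.z _, occ_nil _ _⟩
      · rw [List.length_append, List.length_singleton, ← add_assoc]; exact hj.1
    · rw [← hj.2]
      congr 1
      simp only [img, List.length_append, List.length_singleton]
      omega

/-- Recurrence of prefixes. -/
theorem Fx.recur {D : ℕ} {u P : ℕ → ℕ} (F : Fx D u P) (m : ℕ) :
    ∃ n, 1 ≤ n ∧ OccursAt ((List.range m).map u) u n := by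
  induction m with
  | zero => exact ⟨1, le_rfl, occ_nil _ _⟩
  | succ m ih =>
    rcases Nat.eq_zero_or_pos m with rfl | hm
    · refine ⟨P 1, by have := F.ge 1; omega, ?_⟩
      have := F.z 1
      simp [occ_cons, occ_nil, F.u0, this]
    · obtain ⟨n, hn, ho⟩ := ih
      obtain ⟨s1, -⟩ := F.sync1 _ _ ho
      have h0 : OccursAt ((List.range m).map u) u 0 := by
        have := occ_seg u 0 m
        simpa using this
      obtain ⟨t1, t2⟩ := F.sync1 _ _ h0
      rw [F.p0] at t1 t2
      have hl : m + 1 ≤ (phiW (D + 1) ((List.range m).map u)).length := by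
        have := F.ge m
        simp only [List.length_map, List.length_range, zero_add] at t2
        omega
      refine ⟨P n, by have := F.ge n; omega, ?_⟩
      rw [t1] at s1
      obtain ⟨k, hk⟩ := Nat.exists_eq_add_of_le hl
      rw [hk] at s1
      have e : (List.map (fun t => u (0 + t)) (List.range (m + 1 + k))) =
          (List.range (m + 1)).map u ++ (List.range k).map (fun t => u (m + 1 + t)) := by
        simp [List.range_add]
      rw [e, occ_append] at s1
      exact s1.1

theorem Fx.Rext_iff {D : ℕ} {u P : ℕ → ℕ} (F : Fx D u P) (w : List ℕ) (j : ℕ) :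
    IsFactorS (w ++ [j]) u ↔ ∃ i, EG u w i j := by
  constructor
  · rintro ⟨p, hp⟩
    have : ∃ q, OccursAt (w ++ [j]) u (q + 1) := by
      cases p with
      | succ q => exact ⟨q, hp⟩
      | zero =>
        obtain ⟨n, hn, ho⟩ := F.recur (w ++ [j]).length
        have e : w ++ [j] = (List.range (w ++ [j]).length).map u := by
          have := hp
          unfold OccursAt at this
          simpa using this
        rw [← e] at ho
        obtain ⟨q, rfl⟩ := Nat.exists_eq_add_of_le' hn
        exact ⟨q, ho⟩
    obtain ⟨q, hq⟩ := this
    rw [occ_append, occ_cons] at hq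
    exact ⟨u q, q, rfl, hq.1, hq.2.1⟩
  · rintro ⟨i, q, h1, h2, h3⟩
    refine ⟨q + 1, ?_⟩
    rw [occ_append, occ_cons]
    exact ⟨h2, h3, occ_nil _ _⟩

theorem Lext_iff (u : ℕ → ℕ) (w : List ℕ) (i : ℕ) :
    IsFactorS (i :: w) u ↔ ∃ j, EG u w i j := by
  unfold IsFactorS EG
  simp only [occ_cons]
  constructor
  · rintro ⟨p, h1, h2⟩; exact ⟨_, p, h1, h2, rfl⟩
  · rintro ⟨j, p, h1, h2, h3⟩; exact ⟨p, h1, h2⟩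

/-- Nondegenerate graph. -/
def Nondeg (E : ℕ → ℕ → Prop) : Prop :=
  (∃ i j i' j', E i j ∧ E i' j' ∧ i ≠ i') ∧ (∃ i j i' j', E i j ∧ E i' j' ∧ j ≠ j')

def GoodS (D : ℕ) (E : ℕ → ℕ → Prop) : Prop :=
  ∃ k, k < D ∧ ∀ i j, E i j ↔ ((i = k ∧ k < j ∧ j ≤ D) ∨ (j = k ∧ k < i ∧ i ≤ D) ∨ (i = D ∧ j = D))

def GoodT (D : ℕ) (E : ℕ → ℕ → Prop) : Prop :=
  ∃ i0 k0 p q, i0 < D ∧ k0 < D ∧ (p = i0 ∨ p = D) ∧ (q = k0 ∨ q = D) ∧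
    ∀ i j, E i j ↔ ((i = i0 ∨ i = D) ∧ (j = k0 ∨ j = D) ∧ ¬ (i = p ∧ j = q))

theorem nondeg_img {D : ℕ} {a b : Bool} {E E' : ℕ → ℕ → Prop}
    (h : ∀ i j, E' i j ↔ ∃ i' j', E i' j' ∧ rel D a i i' ∧ rel D b j j') (hn : Nondeg E') :
    Nondeg E := by
  have func : ∀ (c : Bool) (x y z : ℕ), rel D c x z → rel D c y z → x = y := by
    intro c x y z h1 h2
    cases c <;> simp only [rel, if_true, Bool.false_eq_true, if_false] at h1 h2 <;> omega
  obtain ⟨⟨i, j, i', j', h1, h2, h3⟩, ⟨k, l, k', l', h4, h5, h6⟩⟩ := hn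
  rw [h] at h1 h2 h4 h5
  obtain ⟨a1, a2, a3, a4, a5⟩ := h1
  obtain ⟨b1, b2, b3, b4, b5⟩ := h2
  obtain ⟨c1, c2, c3, c4, c5⟩ := h4
  obtain ⟨d1, d2, d3, d4, d5⟩ := h5
  refine ⟨⟨a1, a2, b1, b2, a3, b3, ?_⟩, ⟨c1, c2, d1, d2, c3, d3, ?_⟩⟩
  · rintro rfl; exact h3 (func _ _ _ _ a4 b4)
  · rintro rfl; exact h6 (func _ _ _ _ c5 d5)

theorem not_nondeg_left {D : ℕ} {E : ℕ → ℕ → Prop} (h : ∀ i j, E i j → i = D) : ¬ Nondeg E := by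
  rintro ⟨⟨i, j, i', j', h1, h2, h3⟩, -⟩
  exact h3 ((h _ _ h1).trans (h _ _ h2).symm)

theorem not_nondeg_right {D : ℕ} {E : ℕ → ℕ → Prop} (h : ∀ i j, E i j → j = D) : ¬ Nondeg E := by
  rintro ⟨-, ⟨i, j, i', j', h1, h2, h3⟩⟩
  exact h3 ((h _ _ h1).trans (h _ _ h2).symm)

theorem side {D : ℕ} (a : Bool) (i0 : ℕ) (h0 : i0 < D) :
    (∀ i i', (i' = i0 ∨ i' = D) → rel D a i i' → i = D) ∨
    ∃ i1, i1 < D ∧ ∀ i i', (i' = i0 ∨ i' = D) →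
      (rel D a i i' ↔ (i = i1 ∧ i' = i0) ∨ (i = D ∧ i' = D)) := by
  by_cases h : i0 + 1 = D
  · cases a
    · left; intro i i' h1 h2; simp only [rel, Bool.false_eq_true, if_false] at h2; omega
    · right; refine ⟨0, by omega, ?_⟩; intro i i' h1
      simp only [rel, if_true]; omega
  · cases a
    · right; refine ⟨i0 + 1, by omega, ?_⟩; intro i i' h1
      simp only [rel, Bool.false_eq_true, if_false]; omega
    · left; intro i i' h1 h2; simp only [rel, if_true] at h2; omega

theorem goodT_img {D : ℕ} {a b : Bool} {E E' : ℕ → ℕ → Prop}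
    (h : ∀ i j, E' i j ↔ ∃ i' j', E i' j' ∧ rel D a i i' ∧ rel D b j j') (hn : Nondeg E')
    (hg : GoodT D E) : GoodT D E' := by
  obtain ⟨i0, k0, p, q, hi, hk, hp, hq, hE⟩ := hg
  rcases side a i0 hi with ha | ⟨i1, hi1, ha⟩
  · refine absurd hn (not_nondeg_left (D := D) ?_)
    intro i j hij
    obtain ⟨i', j', h1, h2, h3⟩ := (h _ _).1 hij
    exact ha _ _ ((hE _ _).1 h1).1 h2
  rcases side b k0 hk with hb | ⟨k1, hk1, hb⟩
  · refine absurd hn (not_nondeg_right (D := D) ?_)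
    intro i j hij
    obtain ⟨i', j', h1, h2, h3⟩ := (h _ _).1 hij
    exact hb _ _ ((hE _ _).1 h1).2.1 h3
  refine ⟨i1, k1, if p = D then D else i1, if q = D then D else k1, hi1, hk1, ?_, ?_, ?_⟩
  · split_ifs <;> simp
  · split_ifs <;> simp
  intro i j
  rw [h]
  constructor
  · rintro ⟨i', j', h1, h2, h3⟩
    rw [hE] at h1
    rw [ha _ _ h1.1] at h2
    rw [hb _ _ h1.2.1] at h3
    split_ifs <;> omega
  · rintro ⟨h1, h2, h3⟩
    refine ⟨if i = D then D else i0, if j = D then D else k0, ?_, ?_, ?_⟩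
    · rw [hE]
      split_ifs at h3 ⊢ <;> omega
    · rw [ha _ _ (by split_ifs <;> simp)]
      split_ifs <;> omega
    · rw [hb _ _ (by split_ifs <;> simp)]
      split_ifs <;> omega

theorem goodS_img {D : ℕ} (hD : 2 ≤ D) {a b : Bool} {E E' : ℕ → ℕ → Prop}
    (h : ∀ i j, E' i j ↔ ∃ i' j', E i' j' ∧ rel D a i i' ∧ rel D b j j') (hn : Nondeg E')
    (hg : GoodS D E) : GoodS D E' ∨ GoodT D E' := by
  obtain ⟨k, hk, hE⟩ := hg
  simp only [hE] at h
  by_cases hk1 : k + 1 = D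
  · cases a
    · refine absurd hn (not_nondeg_left (D := D) ?_)
      intro i j hij
      obtain ⟨i', j', h1, h2, h3⟩ := (h _ _).1 hij
      simp only [rel, Bool.false_eq_true, if_false] at h2
      omega
    cases b
    · refine absurd hn (not_nondeg_right (D := D) ?_)
      intro i j hij
      obtain ⟨i', j', h1, h2, h3⟩ := (h _ _).1 hij
      simp only [rel, Bool.false_eq_true, if_false] at h3
      omega
    right
    refine ⟨0, 0, 0, 0, by omega, by omega, Or.inl rfl, Or.inl rfl, ?_⟩
    intro i j
    rw [h]
    simp only [rel, if_true]
    constructor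
    · rintro ⟨i', j', h1, h2, h3⟩; omega
    · rintro ⟨h1, h2, h3⟩
      refine ⟨if i = 0 then k else D, if j = 0 then k else D, ?_, ?_, ?_⟩ <;> split_ifs <;> omega
  · cases a <;> cases b <;> simp only [rel, if_true, Bool.false_eq_true, if_false] at h
    · left
      refine ⟨k + 1, by omega, ?_⟩
      intro i j
      rw [h]
      constructor
      · rintro ⟨i', j', h1, h2, h3⟩; omega
      · intro h1
        by_cases h2 : i = D ∧ j = D
        · exact ⟨D, D, by omega, by omega, by omega⟩
        · exact ⟨i - 1, j - 1, by omega, by omega, by omega⟩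
    · right
      refine ⟨k + 1, 0, D, 0, by omega, by omega, by omega, by omega, ?_⟩
      intro i j
      rw [h]
      constructor
      · rintro ⟨i', j', h1, h2, h3⟩; omega
      · rintro ⟨h1, h2, h3⟩
        refine ⟨if i = D then D else k, if j = 0 then D - 1 else D, ?_, ?_, ?_⟩ <;>
          split_ifs <;> omega
    · right
      refine ⟨0, k + 1, 0, D, by omega, by omega, by omega, by omega, ?_⟩
      intro i j
      rw [h]
      constructor
      · rintro ⟨i', j', h1, h2, h3⟩; omega
      · rintro ⟨h1, h2, h3⟩
        refine ⟨if i = 0 then D - 1 else D, if j = D then D else k, ?_, ?_, ?_⟩ <;>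
          split_ifs <;> omega
    · refine absurd hn (not_nondeg_right (D := D) ?_)
      intro i j hij
      obtain ⟨i', j', h1, h2, h3⟩ := (h _ _).1 hij
      omega

theorem Fx.letters {D : ℕ} {u P : ℕ → ℕ} (F : Fx D u P) (k : ℕ) (hk : k ≤ D) : ∃ n, u n = k := by
  induction k with
  | zero => exact ⟨0, F.u0⟩
  | succ k ih =>
    obtain ⟨n, hn⟩ := ih (by omega)
    exact ⟨P n + 1, by rw [F.one]; omega⟩

/-- Local shape of `u`: description of consecutive pairs of letters. -/
theorem Fx.pairs {D : ℕ} {u P : ℕ → ℕ} (F : Fx D u P) (p : ℕ) :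
    (u p = 0 ∧ 0 < u (p + 1)) ∨ (0 < u p ∧ u (p + 1) = 0) ∨
      (u p = D ∧ u (p + 1) = D ∧ u (p + 2) = 0 ∧ 1 ≤ p ∧ u (p - 1) = 0) := by
  have hD := F.hD
  obtain ⟨n, rfl | rfl | ⟨rfl, h⟩⟩ := F.blocks p
  · left; rw [F.z, F.one]; omega
  · have h1 := F.one n
    rcases (F.le n).lt_or_eq with h | h
    · have h2 := F.z (n + 1)
      rw [F.two n h] at h2
      right; left
      exact ⟨by omega, h2⟩
    · have h2 := F.z (n + 1)
      rw [F.three n h] at h2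
      have h3 := F.three' n h
      right; right
      exact ⟨by omega, h3, h2, by omega, F.z n⟩
  · have h2 := F.z (n + 1)
    rw [F.three n h] at h2
    have h3 := F.three' n h
    right; left
    exact ⟨by omega, h2⟩

theorem Fx.EG_nil {D : ℕ} {u P : ℕ → ℕ} (F : Fx D u P) : GoodS D (EG u []) := by
  have hD := F.hD
  refine ⟨0, by omega, ?_⟩
  intro i j
  simp only [EG, occ_nil, List.length_nil, true_and, add_zero]
  constructor
  · rintro ⟨p, rfl, rfl⟩
    have := F.pairs p
    have := F.le p
    have := F.le (p + 1)
    omega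
  · intro h
    by_cases h1 : i = D ∧ j = D
    · obtain ⟨n, hn⟩ := F.letters D le_rfl
      exact ⟨P n + 1, by rw [F.one]; omega, by rw [add_assoc]; rw [F.three' n hn]; omega⟩
    · rcases (show (i = 0 ∧ 0 < j ∧ j ≤ D) ∨ (j = 0 ∧ 0 < i ∧ i ≤ D) by omega) with h | h
      · obtain ⟨n, hn⟩ := F.letters (j - 1) (by omega)
        exact ⟨P n, by rw [F.z]; omega, by rw [F.one]; omega⟩
      · obtain ⟨n, hn⟩ := F.letters (i - 1) (by omega)
        have := F.two n (by omega)
        refine ⟨P n + 1, by rw [F.one]; omega, ?_⟩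
        rw [add_assoc, ← this, F.z]; omega

theorem Fx.EG_D {D : ℕ} {u P : ℕ → ℕ} (F : Fx D u P) : GoodT D (EG u [D]) := by
  have hD := F.hD
  refine ⟨0, 0, D, D, by omega, by omega, by omega, by omega, ?_⟩
  intro i j
  simp only [EG, occ_cons, occ_nil, List.length_cons, List.length_nil, and_true, zero_add]
  constructor
  · rintro ⟨p, rfl, h, rfl⟩
    have := F.pairs p
    have h2 := F.pairs (p + 1)
    simp only [Nat.add_sub_cancel] at h2
    simp only [add_assoc] at *
    norm_num at *
    omega
  · intro h
    by_cases h1 : i = 0 ∧ j = 0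
    · obtain ⟨n, hn⟩ := F.letters (D - 1) (by omega)
      have := F.two n (by omega)
      refine ⟨P n, by rw [F.z]; omega, by rw [F.one]; omega, ?_⟩
      rw [add_assoc, ← this, F.z]; omega
    · obtain ⟨n, hn⟩ := F.letters D le_rfl
      have h2 := F.three n hn
      have h3 := F.three' n hn
      have h4 := F.one n
      by_cases hi : i = 0
      · exact ⟨P n, by rw [F.z]; omega, by omega, by rw [show P n + 1 + 1 = P n + 2 by omega, h3]; omega⟩
      · refine ⟨P n + 1, by omega, by rw [add_assoc]; exact h3, ?_⟩
        rw [show P n + 1 + 1 + 1 = P (n + 1) by omega, F.z]; omega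

theorem occ_get {u : ℕ → ℕ} {w : List ℕ} {p : ℕ} (h : OccursAt w u p) (t : ℕ)
    (ht : t < w.length) : w[t] = u (p + t) := by
  have : w[t]? = some (u (p + t)) := by
    rw [h]; simp [ht]
  simpa [ht] using this

theorem Fx.struct_left {D : ℕ} {u P : ℕ → ℕ} (F : Fx D u P) (w : List ℕ) (hw : w ≠ [])
    (hw2 : w ≠ [D]) (hn : Nondeg (EG u w)) : ∃ a l, w = pw D a ++ 0 :: l := by
  obtain ⟨⟨i, j, i', j', ⟨p, h1, h2, -⟩, ⟨q, h3, h4, -⟩, hne⟩, -⟩ := hn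
  have hD := F.hD
  cases w with
  | nil => exact absurd rfl hw
  | cons x l =>
    rw [occ_cons] at h2 h4
    by_cases hx : x = 0
    · exact ⟨false, l, by simp [pw, hx]⟩
    have hp := F.pairs p
    have hq := F.pairs q
    have : x = D ∧ (u (p + 2) = 0 ∨ u (q + 2) = 0) := by omega
    cases l with
    | nil => rw [this.1] at hw2; exact absurd rfl hw2
    | cons y l =>
      rw [occ_cons] at h2 h4
      have e1 : u (p + 1 + 1) = u (p + 2) := rfl
      have e2 : u (q + 1 + 1) = u (q + 2) := rfl
      have hy : y = 0 := by omega
      exact ⟨true, l, by simp [pw, hy, this.1]⟩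

theorem Fx.struct_right {D : ℕ} {u P : ℕ → ℕ} (F : Fx D u P) (w : List ℕ) (hw : w ≠ [])
    (hw2 : w ≠ [D]) (hn : Nondeg (EG u w)) : ∃ b l, w = l ++ 0 :: pw D b := by
  obtain ⟨-, ⟨i, j, i', j', ⟨p, -, h1, h2⟩, ⟨q, -, h3, h4⟩, hne⟩⟩ := hn
  have hD := F.hD
  rcases List.eq_nil_or_concat w with rfl | ⟨l, x, rfl⟩
  · exact absurd rfl hw
  rw [List.concat_eq_append] at *
  rw [occ_append, occ_cons] at h1 h3
  by_cases hx : x = 0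
  · exact ⟨false, l, by simp [pw, hx]⟩
  rw [List.length_append, List.length_singleton, ← add_assoc] at h2 h4
  have hp := F.pairs (p + 1 + l.length)
  have hq := F.pairs (q + 1 + l.length)
  have h11 := h1.2.1
  have h31 := h3.2.1
  have : x = D ∧ (u (p + 1 + l.length - 1) = 0 ∨ u (q + 1 + l.length - 1) = 0) := by omega
  rcases List.eq_nil_or_concat l with rfl | ⟨l, y, rfl⟩
  · rw [this.1] at hw2; exact absurd rfl hw2
  rw [List.concat_eq_append] at *
  rw [occ_append, occ_cons] at h1 h3
  rw [List.length_append, List.length_singleton] at this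
  have e1 : p + 1 + (l.length + 1) - 1 = p + 1 + l.length := by omega
  have e2 : q + 1 + (l.length + 1) - 1 = q + 1 + l.length := by omega
  rw [e1, e2] at this
  have hy : y = 0 := by omega
  exact ⟨true, l, by simp [pw, hy, this.1]⟩

theorem seg_add (u : ℕ → ℕ) (p m : ℕ) (z : List ℕ) (h : OccursAt z u p) (hlen : z.length = m) :
    z = (List.range m).map fun t => u (p + t) := by
  subst hlen; exact h

/-- A factor starting and ending with zero is `φ(v)0`. -/
theorem Fx.desub {D : ℕ} {u P : ℕ → ℕ} (F : Fx D u P) (z : List ℕ) (p : ℕ) (hz : OccursAt z u p)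
    (l r : List ℕ) (hl : z = 0 :: l) (hr : z = r ++ [0]) :
    ∃ v, (∀ x ∈ v, x ≤ D) ∧ z = phiW (D + 1) v ++ [0] := by
  have h1 : u p = 0 := by rw [hl, occ_cons] at hz; exact hz.1
  have h2 : u (p + r.length) = 0 := by rw [hr, occ_append, occ_cons] at hz; exact hz.2.1
  obtain ⟨n, rfl⟩ := F.zero _ h1
  obtain ⟨m, hm⟩ := F.zero _ h2
  have hnm : n ≤ m := by
    rw [← F.mono.le_iff_le]; omega
  obtain ⟨k, rfl⟩ := Nat.exists_eq_add_of_le hnm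
  refine ⟨(List.range k).map fun t => u (n + t), ?_, ?_⟩
  · intro x hx
    simp only [List.mem_map] at hx
    obtain ⟨t, -, rfl⟩ := hx
    exact F.le _
  · obtain ⟨s1, s2⟩ := F.sync1 _ _ (occ_seg u n k)
    simp only [List.length_map, List.length_range] at s2
    have hocc := hz
    rw [hr, occ_append] at hocc
    have e : r = phiW (D + 1) ((List.range k).map fun t => u (n + t)) := by
      rw [seg_add _ _ _ _ hocc.1 rfl, seg_add _ _ r.length _ s1 (by omega)]
    rw [← e, hr]

theorem Fx.struct {D : ℕ} {u P : ℕ → ℕ} (F : Fx D u P) (w : List ℕ) (hw : w ≠ [])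
    (hw2 : w ≠ [D]) (hn : Nondeg (EG u w)) :
    ∃ a b v, (∀ x ∈ v, x ≤ D) ∧ w = img D a b v := by
  have hD := F.hD
  obtain ⟨a, l, hl⟩ := F.struct_left w hw hw2 hn
  obtain ⟨b, r, hr⟩ := F.struct_right w hw hw2 hn
  obtain ⟨⟨i, j, -, -, ⟨p, -, hocc, -⟩, -⟩, -⟩ := hn
  have key : ∃ z l' r', w = pw D a ++ (z ++ pw D b) ∧ z = 0 :: l' ∧ z = r' ++ [0] := by
    have hlen : (pw D a).length ≤ r.length := by
      cases a
      · simp [pw]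
      · cases r with
        | nil =>
          rw [hl] at hr
          simp only [pw, if_true, List.cons_append, List.nil_append, List.cons.injEq] at hr
          omega
        | cons y r => simp [pw]
    have hpre : pw D a <+: r := by
      apply List.prefix_of_prefix_length_le (l₃ := w) _ _ hlen
      · exact ⟨_, hl.symm⟩
      · exact ⟨_, hr.symm⟩
    obtain ⟨r', rfl⟩ := hpre
    have e : 0 :: l = r' ++ 0 :: pw D b := by
      rw [hl, List.append_assoc] at hr
      exact List.append_cancel_left hr
    refine ⟨r' ++ [0], (r' ++ [0]).tail, r', ?_, ?_, rfl⟩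
    · rw [hr]; simp
    · cases r' with
      | nil => simp
      | cons y r' => simp at e ⊢; exact e.1.symm
  obtain ⟨z, l', r', e1, e2, e3⟩ := key
  have hz : OccursAt z u (p + 1 + (pw D a).length) := by
    rw [e1, occ_append, occ_append] at hocc
    exact hocc.2.1
  obtain ⟨v, hv, hv2⟩ := F.desub z _ hz l' r' e2 e3
  exact ⟨a, b, v, hv, by rw [e1, hv2]; rfl⟩

theorem len_phiW (D : ℕ) (v : List ℕ) : v.length ≤ (phiW (D + 1) v).length := by
  induction v with
  | nil => simp
  | cons x v ih =>
    have : 1 ≤ (phiL (D + 1) x).length := by unfold phiL; split_ifs <;> simp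
    simp only [phiW, List.flatMap_cons, List.length_append, List.length_cons] at *
    omega

theorem Fx.good {D : ℕ} {u P : ℕ → ℕ} (F : Fx D u P) (N : ℕ) (w : List ℕ) (hN : w.length ≤ N)
    (hn : Nondeg (EG u w)) : GoodS D (EG u w) ∨ GoodT D (EG u w) := by
  induction N generalizing w with
  | zero =>
    have : w = [] := List.eq_nil_of_length_eq_zero (by omega)
    subst this
    exact Or.inl F.EG_nil
  | succ N ih =>
    by_cases h1 : w = []
    · subst h1; exact Or.inl F.EG_nil
    by_cases h2 : w = [D]
    · subst h2; exact Or.inr F.EG_D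
    obtain ⟨a, b, v, hv, rfl⟩ := F.struct w h1 h2 hn
    have h := F.EG_img a b v hv
    have hl : v.length ≤ N := by
      have := len_phiW D v
      simp only [img, List.length_append, List.length_singleton] at hN
      omega
    rcases ih v hl (nondeg_img h hn) with hg | hg
    · exact goodS_img F.hD h hn hg
    · exact Or.inr (goodT_img h hn hg)

theorem Fx.cards {D : ℕ} {u P : ℕ → ℕ} (F : Fx D u P) (w : List ℕ) :
    (Lext u w).ncard = {i | ∃ j, EG u w i j}.ncard ∧
    (Rext u w).ncard = {j | ∃ i, EG u w i j}.ncard ∧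
    (Bext u w).ncard = {x : ℕ × ℕ | EG u w x.1 x.2}.ncard := by
  refine ⟨?_, ?_, ?_⟩
  · rw [← Set.ncard_image_of_injective (f := fun i => i :: w) _ (fun a b h => by simpa using h)]
    congr 1
    ext x
    simp only [Lext, Set.mem_ofPred_eq, Set.mem_image]
    constructor
    · rintro ⟨i, rfl, h⟩; exact ⟨i, (Lext_iff _ _ _).1 h, rfl⟩
    · rintro ⟨i, h, rfl⟩; exact ⟨i, rfl, (Lext_iff _ _ _).2 h⟩
  · rw [← Set.ncard_image_of_injective (f := fun i : ℕ => w ++ [i]) _ (fun a b h => by simpa using h)]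
    congr 1
    ext x
    simp only [Rext, Set.mem_ofPred_eq, Set.mem_image]
    constructor
    · rintro ⟨i, rfl, h⟩; exact ⟨i, (F.Rext_iff _ _).1 h, rfl⟩
    · rintro ⟨i, h, rfl⟩; exact ⟨i, rfl, (F.Rext_iff _ _).2 h⟩
  · rw [← Set.ncard_image_of_injective (f := fun x : ℕ × ℕ => x.1 :: (w ++ [x.2])) _
      (fun a b h => by simpa [Prod.ext_iff] using h)]
    congr 1
    ext x
    simp only [Bext, Set.mem_ofPred_eq, Set.mem_image]
    constructor
    · rintro ⟨i, j, rfl, h⟩; exact ⟨(i, j), (EG_iff _ _ _ _).1 h, rfl⟩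
    · rintro ⟨⟨i, j⟩, h, rfl⟩; exact ⟨i, j, rfl, (EG_iff _ _ _ _).2 h⟩

theorem count_S {D : ℕ} {E : ℕ → ℕ → Prop} (h : GoodS D E) :
    ({x : ℕ × ℕ | E x.1 x.2}.ncard : ℤ) - ({i | ∃ j, E i j}.ncard : ℤ)
      - ({j | ∃ i, E i j}.ncard : ℤ) + 1 = 0 := by
  obtain ⟨k, hk, hE⟩ := h
  have e1 : {i | ∃ j, E i j} = ((Finset.Icc k D : Finset ℕ) : Set ℕ) := by
    ext i
    simp only [Set.mem_ofPred_eq, hE, Finset.coe_Icc, Set.mem_Icc]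
    constructor
    · rintro ⟨j, h⟩; omega
    · intro h
      by_cases hi : i = k
      · exact ⟨D, by omega⟩
      · exact ⟨k, by omega⟩
  have e2 : {j | ∃ i, E i j} = ((Finset.Icc k D : Finset ℕ) : Set ℕ) := by
    ext i
    simp only [Set.mem_ofPred_eq, hE, Finset.coe_Icc, Set.mem_Icc]
    constructor
    · rintro ⟨j, h⟩; omega
    · intro h
      by_cases hi : i = k
      · exact ⟨D, by omega⟩
      · exact ⟨k, by omega⟩
  have e3 : {x : ℕ × ℕ | E x.1 x.2} =
      ((({k} ×ˢ Finset.Ioc k D) ∪ ((Finset.Ioc k D ×ˢ {k}) ∪ {(D, D)}) : Finset (ℕ × ℕ)) :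
        Set (ℕ × ℕ)) := by
    ext ⟨i, j⟩
    simp only [Set.mem_ofPred_eq, hE, Finset.coe_union, Set.mem_union, Finset.mem_coe,
      Finset.mem_product, Finset.mem_singleton, Finset.mem_Ioc, Prod.mk.injEq]
    omega
  rw [e1, e2, e3, Set.ncard_coe_finset, Set.ncard_coe_finset, Finset.card_union_of_disjoint,
    Finset.card_union_of_disjoint]
  · simp only [Finset.card_product, Finset.card_singleton, Nat.card_Ioc, Nat.card_Icc]
    push_cast
    omega
  · rw [Finset.disjoint_left]
    rintro ⟨i, j⟩
    simp only [Finset.mem_product, Finset.mem_singleton, Finset.mem_Ioc, Prod.mk.injEq]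
    omega
  · rw [Finset.disjoint_left]
    rintro ⟨i, j⟩
    simp only [Finset.mem_union, Finset.mem_product, Finset.mem_singleton, Finset.mem_Ioc,
      Prod.mk.injEq]
    omega

theorem count_T {D : ℕ} {E : ℕ → ℕ → Prop} (h : GoodT D E) :
    ({x : ℕ × ℕ | E x.1 x.2}.ncard : ℤ) - ({i | ∃ j, E i j}.ncard : ℤ)
      - ({j | ∃ i, E i j}.ncard : ℤ) + 1 = 0 := by
  obtain ⟨i0, k0, p, q, hi, hk, hp, hq, hE⟩ := h
  have e1 : {i | ∃ j, E i j} = (({i0, D} : Finset ℕ) : Set ℕ) := by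
    ext i
    simp only [Set.mem_ofPred_eq, hE, Finset.mem_coe, Finset.mem_insert, Finset.mem_singleton]
    constructor
    · rintro ⟨j, h⟩; omega
    · intro h
      by_cases hi : q = k0
      · exact ⟨D, by omega⟩
      · exact ⟨k0, by omega⟩
  have e2 : {j | ∃ i, E i j} = (({k0, D} : Finset ℕ) : Set ℕ) := by
    ext i
    simp only [Set.mem_ofPred_eq, hE, Finset.mem_coe, Finset.mem_insert, Finset.mem_singleton]
    constructor
    · rintro ⟨j, h⟩; omega
    · intro h
      by_cases hi : p = i0
      · exact ⟨D, by omega⟩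
      · exact ⟨i0, by omega⟩
  have e3 : {x : ℕ × ℕ | E x.1 x.2} =
      (((({i0, D} : Finset ℕ) ×ˢ ({k0, D} : Finset ℕ)).erase (p, q) : Finset (ℕ × ℕ)) :
        Set (ℕ × ℕ)) := by
    ext ⟨i, j⟩
    simp only [Set.mem_ofPred_eq, hE, Finset.mem_coe, Finset.mem_erase,
      Finset.mem_product, Finset.mem_insert, Finset.mem_singleton, Prod.mk.injEq, ne_eq]
    omega
  rw [e1, e2, e3, Set.ncard_coe_finset, Set.ncard_coe_finset, Set.ncard_coe_finset,
    Finset.card_erase_of_mem, Finset.card_product, Finset.card_pair hi.ne, Finset.card_pair hk.ne]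
  · norm_num
  · simp only [Finset.mem_product, Finset.mem_insert, Finset.mem_singleton]
    exact ⟨hp, hq⟩

theorem two_of_ncard {s : Set ℕ} (h : 2 ≤ s.ncard) : ∃ a ∈ s, ∃ b ∈ s, a ≠ b := by
  have hf : s.Finite := Set.finite_of_ncard_ne_zero (by omega)
  exact (Set.one_lt_ncard hf).1 (by omega)

/-- For `d ≥ 3`, all bispecial factors of the fixed point `u_d` of `φ_d`
are ordinary: the bilateral order `b(w) = #Bext(w) − #Lext(w) − #Rext(w) + 1` is `0`. -/
theorem statement3 (d : ℕ) (hd : 3 ≤ d) (u : ℕ → ℕ) (hu : IsPhiFixed d u)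
    (w : List ℕ) (hw : Bispecial u w) :
    bord u w = 0 := by
  obtain ⟨D, rfl⟩ : ∃ D, d = D + 1 := ⟨d - 1, by omega⟩
  obtain ⟨P, F⟩ := mkFx D (by omega) u hu
  obtain ⟨c1, c2, c3⟩ := F.cards w
  obtain ⟨-, hl, hr⟩ := hw
  rw [c1] at hl
  rw [c2] at hr
  obtain ⟨i, ⟨j, h1⟩, i', ⟨j', h2⟩, h3⟩ := two_of_ncard hl
  obtain ⟨l, ⟨k, h4⟩, l', ⟨k', h5⟩, h6⟩ := two_of_ncard hr
  have hn : Nondeg (EG u w) := ⟨⟨i, j, i', j', h1, h2, h3⟩, ⟨k, l, k', l', h4, h5, h6⟩⟩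
  unfold bord
  rw [c1, c2, c3]
  rcases F.good w.length w le_rfl hn with hg | hg
  · exact count_S hg
  · exact count_T hg

end RichRT
end

section
/- For every integer d ≥ 3, the binary sequence π(u_d), the image of the fixed point u_d of φ_d under the projection π : i ↦ a b^i, is rich: every factor of π(u_d) of length n contains exactly n+1 distinct palindromic factors (including the empty word). -/
namespace RichRT

variable {A : Type*}

/-- The projection `π : i ↦ a bⁱ` to the binary alphabet (here `a = false`, `b = true`). -/
def piL (i : ℕ) : List Bool := false :: List.replicate i true

/-- The slice of `w` of length `n` starting at `s`. -/
def sl {A : Type*} (w : ℕ → A) : ℕ → ℕ → List A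
  | _, 0 => []
  | s, n + 1 => w s :: sl w (s + 1) n

@[simp] theorem sl_zero {A : Type*} (w : ℕ → A) (s : ℕ) : sl w s 0 = [] := rfl

theorem sl_succ {A : Type*} (w : ℕ → A) (s n : ℕ) : sl w s (n + 1) = w s :: sl w (s + 1) n := rfl

@[simp] theorem sl_length {A : Type*} (w : ℕ → A) (s n : ℕ) : (sl w s n).length = n := by
  induction n generalizing s with
  | zero => rfl
  | succ n ih => simp [sl_succ, ih]

theorem sl_add {A : Type*} (w : ℕ → A) (s m n : ℕ) :
    sl w s (m + n) = sl w s m ++ sl w (s + m) n := by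
  induction m generalizing s with
  | zero => simp
  | succ m ih =>
    rw [show m + 1 + n = (m + n) + 1 by omega, sl_succ, sl_succ, ih]
    simp [show s + 1 + m = s + (m + 1) by omega]

theorem sl_one {A : Type*} (w : ℕ → A) (s : ℕ) : sl w s 1 = [w s] := rfl

theorem sl_eq_range {A : Type*} (w : ℕ → A) (s n : ℕ) :
    sl w s n = (List.range n).map fun t => w (s + t) := by
  induction n generalizing s with
  | zero => rfl
  | succ n ih =>
    rw [sl_succ, ih, List.range_succ_eq_map]
    simp [Function.comp_def, Nat.add_assoc, Nat.add_comm 1]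

theorem occursAt_iff {A : Type*} (w : List A) (u : ℕ → A) (j : ℕ) :
    OccursAt w u j ↔ sl u j w.length = w := by
  rw [OccursAt, sl_eq_range]; exact eq_comm

theorem mem_sl {A : Type*} {w : ℕ → A} {s n : ℕ} {c : A} :
    c ∈ sl w s n ↔ ∃ j, s ≤ j ∧ j < s + n ∧ w j = c := by
  rw [sl_eq_range]
  simp only [List.mem_map, List.mem_range]
  constructor
  · rintro ⟨a, h, rfl⟩; exact ⟨s + a, by omega, by omega, rfl⟩
  · rintro ⟨j, h1, h2, rfl⟩; exact ⟨j - s, by omega, by congr 1; omega⟩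

/-- split a slice at an intermediate position -/
theorem sl_split {A : Type*} (w : ℕ → A) {s n a b : ℕ} (h : n = a + b) :
    sl w s n = sl w s a ++ sl w (s + a) b := by
  rw [h, sl_add]

theorem sl_append_eq {A : Type*} {w : ℕ → A} {s : ℕ} {x y : List A} :
    sl w s (x ++ y).length = x ++ y ↔ sl w s x.length = x ∧ sl w (s + x.length) y.length = y := by
  rw [List.length_append, sl_add]
  constructor
  · intro h
    exact List.append_inj h (by simp)
  · rintro ⟨h1, h2⟩; rw [h1, h2]

theorem sl_cons_eq {A : Type*} {w : ℕ → A} {s : ℕ} {c : A} {y : List A} :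
    sl w s (c :: y).length = c :: y ↔ w s = c ∧ sl w (s + 1) y.length = y := by
  rw [List.length_cons, sl_succ]; simp

theorem infix_sl {A : Type*} {w : ℕ → A} {s n : ℕ} {p : List A} :
    p <:+: sl w s n ↔ ∃ j, s ≤ j ∧ j + p.length ≤ s + n ∧ sl w j p.length = p := by
  constructor
  · rintro ⟨a, b, h⟩
    have hl : a.length + p.length + b.length = n := by
      have := congrArg List.length h; simpa [Nat.add_assoc] using this
    refine ⟨s + a.length, by omega, by omega, ?_⟩
    have h2 : sl w s ((a ++ p) ++ b).length = (a ++ p) ++ b := by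
      rw [h]; simp
    exact (sl_append_eq.1 (sl_append_eq.1 h2).1).2
  · rintro ⟨j, h1, h2, h3⟩
    refine ⟨sl w s (j - s), sl w (j + p.length) (s + n - (j + p.length)), ?_⟩
    rw [sl_split w (s := s) (n := n) (a := j - s) (b := s + n - j) (by omega),
      show s + (j - s) = j by omega,
      sl_split w (s := j) (a := p.length) (b := s + n - (j + p.length)) (by omega), h3]
    simp

/-- the word is a palindrome -/
def Pal {A : Type*} (x : List A) : Prop := x.reverse = x

/-- Returns to `x` (with left context `L` and right context `R`) are palindromic. -/
def Ret {A : Type*} (w : ℕ → A) (L R : ℕ → Prop) (x : List A) : Prop :=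
  ∀ s t, s < t → sl w s x.length = x → L s → R (s + x.length) →
    sl w t x.length = x → L t → R (t + x.length) →
    ∃ r, s ≤ r ∧ r < t ∧ L r ∧ Pal (sl w r (t + x.length - r))

abbrev Top : ℕ → Prop := fun _ => True

theorem rich_of_ret {A : Type*} (v : ℕ → A) (H : ∀ p, Pal p → Ret v Top Top p) (s n : ℕ) :
    palCount (sl v s n) = n + 1 := by
  classical
  induction n with
  | zero =>
    unfold palCount
    rw [Set.ncard_eq_one]
    refine ⟨[], ?_⟩
    ext p
    simp only [sl_zero, List.infix_nil, Set.mem_ofPred_eq, Set.mem_singleton_iff]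
    constructor
    · exact fun h => h.1
    · rintro rfl; simp
  | succ n ih =>
    have hex : ∃ r, s ≤ r ∧ r ≤ s + n ∧ Pal (sl v r (s + n + 1 - r)) :=
      ⟨s + n, by omega, le_rfl, by
        rw [show s + n + 1 - (s + n) = 1 by omega, sl_one]; rfl⟩
    obtain ⟨h1, h2, h3⟩ := Nat.find_spec hex
    have hmin := fun m (hm : m < Nat.find hex) => Nat.find_min hex hm
    generalize Nat.find hex = r0 at h1 h2 h3 hmin
    set q := sl v r0 (s + n + 1 - r0) with hq
    have hql : q.length = s + n + 1 - r0 := by simp [hq]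
    have hqn : ¬ q <:+: sl v s n := by
      rw [infix_sl]
      rintro ⟨j, hj1, hj2, hj3⟩
      obtain ⟨r, ha, hb, -, hc⟩ := H q h3 j r0 (by omega) hj3 trivial trivial
        (by rw [hql]) trivial trivial
      refine hmin r hb ⟨by omega, by omega, ?_⟩
      rwa [hql, show r0 + (s + n + 1 - r0) = s + n + 1 by omega] at hc
    have hset : {p : List A | p <:+: sl v s (n + 1) ∧ p.reverse = p}
        = insert q {p : List A | p <:+: sl v s n ∧ p.reverse = p} := by
      ext p
      simp only [Set.mem_ofPred_eq, Set.mem_insert_iff]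
      constructor
      · rintro ⟨hp, hpp⟩
        obtain ⟨j, hj1, hj2, hj3⟩ := infix_sl.1 hp
        by_cases hj : j + p.length ≤ s + n
        · right; exact ⟨infix_sl.2 ⟨j, hj1, hj, hj3⟩, hpp⟩
        · by_cases hp0 : p = []
          · right; subst hp0; simp
          have hpl : 0 < p.length := List.length_pos_iff.2 hp0
          have hpe : p = sl v j (s + n + 1 - j) := by
            rw [← show p.length = s + n + 1 - j by omega, hj3]
          have hr : r0 ≤ j := by
            by_contra hlt
            exact hmin j (by omega) ⟨hj1, by omega, by rw [← hpe]; exact hpp⟩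
          rcases Nat.lt_or_eq_of_le hr with hlt | heq
          · right
            refine ⟨?_, hpp⟩
            have hqs : q = sl v r0 (j - r0) ++ p := by
              rw [hq, sl_split v (s := r0) (a := j - r0) (b := s + n + 1 - j) (by omega),
                show r0 + (j - r0) = j by omega, ← hpe]
            have hqs2 : q = p ++ (sl v r0 (j - r0)).reverse := by
              have := congrArg List.reverse hqs
              rw [List.reverse_append, hpp, h3] at this
              exact this
            have h4 : sl v r0 q.length = q := by rw [hql]
            rw [hqs2] at h4
            exact infix_sl.2 ⟨r0, h1, by omega, (sl_append_eq.1 h4).1⟩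
          · left; rw [hpe, ← heq]
      · rintro (rfl | ⟨hp, hpp⟩)
        · exact ⟨infix_sl.2 ⟨r0, h1, by omega, by rw [hql]⟩, h3⟩
        · obtain ⟨j, hj1, hj2, hj3⟩ := infix_sl.1 hp
          exact ⟨infix_sl.2 ⟨j, hj1, by omega, hj3⟩, hpp⟩
    unfold palCount at ih ⊢
    have hfin : {p : List A | p <:+: sl v s n ∧ p.reverse = p}.Finite := by
      refine Set.Finite.subset (List.finite_toSet (sl v s n).sublists) ?_
      intro p hp
      exact List.mem_sublists.2 hp.1.sublist
    rw [hset, Set.ncard_insert_of_notMem (fun h => hqn h.1) hfin, ih]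

/-- word image of a marker code -/
def fm {A : Type*} (m : A) (B : ℕ → List A) (y : List ℕ) : List A := y.flatMap fun i => m :: B i

theorem fm_cons {A : Type*} (m : A) (B : ℕ → List A) (i : ℕ) (y : List ℕ) :
    fm m B (i :: y) = m :: (B i ++ fm m B y) := by simp [fm]

theorem fm_nil {A : Type*} (m : A) (B : ℕ → List A) : fm m B [] = [] := rfl

theorem fm_append {A : Type*} (m : A) (B : ℕ → List A) (x y : List ℕ) :
    fm m B (x ++ y) = fm m B x ++ fm m B y := by simp [fm]

/-- conditions on a marker code -/
structure Code {A : Type*} (m : A) (B : ℕ → List A) : Prop where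
  inj : ∀ i j, B i = B j → i = j
  nm : ∀ i, m ∉ B i
  const : ∀ i, ∃ k c, B i = List.replicate k c

theorem Code.pal {A : Type*} {m : A} {B : ℕ → List A} (C : Code m B) (i : ℕ) :
    (B i).reverse = B i := by
  obtain ⟨k, c, h⟩ := C.const i
  simp [h]

theorem fm_head {A : Type*} (m : A) (B : ℕ → List A) (y : List ℕ) :
    ∃ z, fm m B y ++ [m] = m :: z := by
  cases y with
  | nil => exact ⟨[], rfl⟩
  | cons i y => rw [fm_cons]; exact ⟨_, rfl⟩

theorem append_marker_inj {A : Type*} {m : A} {a b z z' : List A} (ha : m ∉ a) (hb : m ∉ b)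
    (h : a ++ m :: z = b ++ m :: z') : a = b := by
  induction a generalizing b with
  | nil =>
    cases b with
    | nil => rfl
    | cons c b => simp at h; simp [h.1] at hb
  | cons c a ih =>
    cases b with
    | nil => simp at h; simp [h.1] at ha
    | cons c' b =>
      simp only [List.cons_append, List.cons.injEq] at h
      simp only [List.mem_cons, not_or] at ha hb
      rw [h.1, ih ha.2 hb.2 h.2]

theorem fm_inj {A : Type*} {m : A} {B : ℕ → List A} (C : Code m B) (y y' : List ℕ)
    (h : fm m B y ++ [m] = fm m B y' ++ [m]) : y = y' := by
  induction y generalizing y' with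
  | nil =>
    cases y' with
    | nil => rfl
    | cons j y' => simp [fm] at h
  | cons i y ih =>
    cases y' with
    | nil => simp [fm] at h
    | cons j y' =>
      rw [fm_cons, fm_cons] at h
      simp only [List.cons_append, List.cons.injEq, true_and, List.append_assoc] at h
      obtain ⟨z, hz⟩ := fm_head m B y
      obtain ⟨z', hz'⟩ := fm_head m B y'
      have h2 := h
      rw [hz, hz'] at h2
      have e := C.inj _ _ (append_marker_inj (C.nm i) (C.nm j) h2)
      subst e
      rw [ih y' (List.append_cancel_left h)]

theorem fm_reverse {A : Type*} {m : A} {B : ℕ → List A} (C : Code m B) (y : List ℕ) :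
    (fm m B y ++ [m]).reverse = fm m B y.reverse ++ [m] := by
  induction y with
  | nil => rfl
  | cons i y ih =>
    rw [List.reverse_cons, fm_append, List.append_assoc, fm_cons m B i [], fm_nil]
    have : m :: (B i ++ fm m B y) ++ [m] = m :: (B i ++ (fm m B y ++ [m])) := by simp
    rw [fm_cons, this, List.reverse_cons, List.reverse_append, ih, C.pal]
    simp

theorem fm_pal {A : Type*} {m : A} {B : ℕ → List A} (C : Code m B) {y : List ℕ}
    (h : Pal y) : Pal (fm m B y ++ [m]) := by
  unfold Pal at *
  rw [fm_reverse C, h]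

theorem pal_of_fm {A : Type*} {m : A} {B : ℕ → List A} (C : Code m B) {y : List ℕ}
    (h : Pal (fm m B y ++ [m])) : Pal y := by
  unfold Pal at *
  rw [fm_reverse C] at h
  exact fm_inj C _ _ h

theorem fm_len {A : Type*} {m : A} {B : ℕ → List A} (y : List ℕ) :
    y.length ≤ (fm m B y).length := by
  induction y with
  | nil => simp
  | cons i y ih => rw [fm_cons]; simp; omega

/-- block starting positions -/
def pos {A : Type*} (u : ℕ → ℕ) (B : ℕ → List A) : ℕ → ℕ
  | 0 => 0
  | n + 1 => pos u B n + 1 + (B (u n)).length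

/-- `w` is the image of `u` -/
def IsIm {A : Type*} (w : ℕ → A) (u : ℕ → ℕ) (m : A) (B : ℕ → List A) : Prop :=
  ∀ n, w (pos u B n) = m ∧ sl w (pos u B n + 1) (B (u n)).length = B (u n)

section
variable {A : Type*} {w : ℕ → A} {u : ℕ → ℕ} {m : A} {B : ℕ → List A}

theorem pos_succ (n : ℕ) : pos u B (n + 1) = pos u B n + 1 + (B (u n)).length := rfl

theorem pos_strictMono : StrictMono (pos u B) :=
  strictMono_nat_of_lt_succ fun n => by rw [pos_succ]; omega

theorem pos_ge (n : ℕ) : n ≤ pos u B n := (pos_strictMono (u := u) (B := B)).id_le n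

theorem exists_block_s4 (u : ℕ → ℕ) (B : ℕ → List A) (j : ℕ) :
    ∃ n, pos u B n ≤ j ∧ j < pos u B (n + 1) := by
  induction j with
  | zero => exact ⟨0, le_rfl, by rw [pos_succ]; omega⟩
  | succ j ih =>
    obtain ⟨n, h1, h2⟩ := ih
    by_cases h : j + 1 < pos u B (n + 1)
    · exact ⟨n, by omega, h⟩
    · exact ⟨n + 1, by omega, by rw [pos_succ (n + 1)]; omega⟩

theorem mem_block (I : IsIm w u m B) {n j : ℕ} (h1 : pos u B n < j) (h2 : j < pos u B (n + 1)) :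
    w j ∈ B (u n) := by
  rw [← (I n).2, mem_sl]
  rw [pos_succ] at h2
  exact ⟨j, by omega, by omega, rfl⟩

theorem eq_pos (C : Code m B) (I : IsIm w u m B) {j : ℕ} (h : w j = m) : ∃ n, j = pos u B n := by
  obtain ⟨n, h1, h2⟩ := exists_block_s4 u B j
  rcases Nat.lt_or_eq_of_le h1 with h3 | h3
  · exact absurd (h ▸ mem_block I h3 h2) (C.nm _)
  · exact ⟨n, h3.symm⟩

theorem sl_pos (I : IsIm w u m B) (n l : ℕ) :
    sl w (pos u B n) (pos u B (n + l) - pos u B n) = fm m B (sl u n l) := by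
  induction l generalizing n with
  | zero => simp [fm_nil]
  | succ l ih =>
    have hm : pos u B (n + 1) ≤ pos u B (n + 1 + l) := pos_strictMono.monotone (by omega)
    have e := pos_succ (u := u) (B := B) n
    rw [sl_succ, fm_cons, ← ih, show n + (l + 1) = n + 1 + l by omega,
      show pos u B (n + 1 + l) - pos u B n
        = ((B (u n)).length + (pos u B (n + 1 + l) - pos u B (n + 1))) + 1 by omega,
      sl_succ, (I n).1, sl_add, (I n).2, e]

theorem sl_pos_m (I : IsIm w u m B) (n l : ℕ) :
    sl w (pos u B n) (pos u B (n + l) + 1 - pos u B n) = fm m B (sl u n l) ++ [m] := by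
  have hm : pos u B n ≤ pos u B (n + l) := pos_strictMono.monotone (by omega)
  rw [sl_split w (a := pos u B (n + l) - pos u B n) (b := 1) (by omega), sl_pos I, sl_one,
    show pos u B n + (pos u B (n + l) - pos u B n) = pos u B (n + l) by omega, (I _).1]

theorem Ret.mono {w : ℕ → A} {L R L' R' : ℕ → Prop} {x : List A} (h : Ret w L R x)
    (hL : ∀ n, L' n ↔ L n) (hR : ∀ n, R' n → R n) : Ret w L' R' x := by
  intro s t hst a b c d e f
  obtain ⟨r, h1, h2, h3, h4⟩ := h s t hst a ((hL _).1 b) (hR _ c) d ((hL _).1 e) (hR _ f)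
  exact ⟨r, h1, h2, (hL _).2 h3, h4⟩

/-- Step 2: decoding palindromes starting with the marker. -/
theorem ret_step2 (C : Code m B) (I : IsIm w u m B) (L R : ℕ → Prop) (z : List A)
    (hq : Pal (m :: z))
    (H : ∀ y, m :: z = fm m B y ++ [m] → Pal y →
      Ret u (fun n => L (pos u B n)) (fun n => R (pos u B n + 1)) y) :
    Ret w L R (m :: z) := by
  have key : ∀ s, sl w s (m :: z).length = m :: z → ∃ n l, s = pos u B n ∧
      s + (m :: z).length = pos u B (n + l) + 1 ∧ m :: z = fm m B (sl u n l) ++ [m] := by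
    intro s hs
    have h1 : w s = m := by simpa [sl_succ] using (sl_cons_eq.1 hs).1
    obtain ⟨n, rfl⟩ := eq_pos C I h1
    have h2 : w (pos u B n + z.length) = m := by
      have hq' : m :: z = z.reverse ++ [m] := by
        have := hq; unfold Pal at this; rw [List.reverse_cons] at this; exact this.symm
      rw [hq'] at hs
      have := (sl_append_eq.1 hs).2
      simpa [sl_succ] using this
    obtain ⟨k, hk⟩ := eq_pos C I h2
    have hnk : n ≤ k := by
      by_contra hlt
      have := pos_strictMono (u := u) (B := B) (show k < n by omega)
      omega
    obtain ⟨l, rfl⟩ := Nat.exists_eq_add_of_le hnk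
    refine ⟨n, l, rfl, by simp; omega, ?_⟩
    rw [← sl_pos_m I, ← hs]
    congr 1
    simp; omega
  intro s t hst hs Ls Rs ht Lt Rt
  obtain ⟨n, l, hn, hl, hy⟩ := key s hs
  obtain ⟨n', l', hn', hl', hy'⟩ := key t ht
  have hyy := fm_inj C _ _ (hy ▸ hy')
  have hll : l = l' := by simpa using congrArg List.length hyy
  subst hll
  have hpy : Pal (sl u n l) := pal_of_fm C (hy ▸ hq)
  have hnn : n < n' := by
    rw [hn, hn'] at hst
    exact pos_strictMono.lt_iff_lt.1 hst
  obtain ⟨r, h1, h2, h3, h4⟩ := H _ hy hpy n n' hnn (by simp) (show L (pos u B n) from hn ▸ Ls)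
    (by simp only [sl_length]; rw [← hl]; exact Rs) (by simp [hyy]) (show L (pos u B n') from hn' ▸ Lt)
    (by simp only [sl_length]; rw [← hl']; exact Rt)
  refine ⟨pos u B r, ?_, ?_, h3, ?_⟩
  · rw [hn]; exact pos_strictMono.monotone h1
  · rw [hn']; exact pos_strictMono h2
  · rw [hl']
    have := fm_pal C h4
    rw [← sl_pos_m I] at this
    simp only [sl_length] at this
    rwa [show r + (n' + l - r) = n' + l by omega] at this

/-- left context: `α` ends at `j` -/
def Lc (w : ℕ → A) (α : List A) : ℕ → Prop := fun j => ∃ i, j = i + α.length ∧ sl w i α.length = α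
/-- right context: `α` reversed starts at `j` -/
def Rc (w : ℕ → A) (α : List A) : ℕ → Prop := fun j => sl w j α.reverse.length = α.reverse

/-- Step 1 -/
theorem ret_step1 (α q : List A) (H : Ret w (Lc w α) (Rc w α) q) :
    Ret w Top Top (α ++ q ++ α.reverse) := by
  intro s t hst hs _ _ ht _ _
  obtain ⟨hs1, hs2⟩ := sl_append_eq.1 hs
  obtain ⟨hs0, hs1⟩ := sl_append_eq.1 hs1
  obtain ⟨ht1, ht2⟩ := sl_append_eq.1 ht
  obtain ⟨ht0, ht1⟩ := sl_append_eq.1 ht1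
  rw [List.length_append, ← Nat.add_assoc] at hs2 ht2
  obtain ⟨r, h1, h2, ⟨i, hi, hi2⟩, h4⟩ := H (s + α.length) (t + α.length) (by omega) hs1
    ⟨s, rfl, hs0⟩ hs2 ht1 ⟨t, rfl, ht0⟩ ht2
  refine ⟨i, by omega, by omega, trivial, ?_⟩
  have e : sl w i (t + (α ++ q ++ α.reverse).length - i)
      = α ++ sl w r (t + α.length + q.length - r) ++ α.reverse := by
    simp only [List.length_append, List.length_reverse]
    rw [sl_split w (a := α.length + (t + α.length + q.length - r)) (b := α.length) (by omega),
      sl_add, hi2, ← hi, show i + (α.length + (t + α.length + q.length - r))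
        = t + α.length + q.length by omega]
    rw [List.length_reverse] at ht2
    rw [ht2]
  unfold Pal at *
  rw [e]
  simp only [List.reverse_append, h4, List.reverse_reverse, List.append_assoc]

theorem pal_decomp (m : A) {x : List A} (hx : Pal x) (hm : m ∈ x) :
    ∃ α z, x = α ++ (m :: z) ++ α.reverse ∧ m ∉ α ∧ Pal (m :: z) := by
  have hp : List.Palindrome x := List.Palindrome.of_reverse_eq hx
  induction hp with
  | nil => simp at hm
  | singleton c =>
    simp only [List.mem_singleton] at hm
    subst hm
    exact ⟨[], [], by simp, by simp, rfl⟩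
  | @cons_concat c l hl ih =>
    by_cases hc : m = c
    · subst hc
      exact ⟨[], l ++ [m], by simp, by simp, by simpa using hx⟩
    · have hml : m ∈ l := by simpa [hc] using hm
      obtain ⟨α, z, h1, h2, h3⟩ := ih hl.reverse_eq hml
      refine ⟨c :: α, z, ?_, by simp [hc, h2], h3⟩
      rw [h1]; simp

theorem lc_pos_iff (I : IsIm w u m B) {α : List A} (h0 : α ≠ []) (hm : m ∉ α)
    (n : ℕ) : Lc w α (pos u B n) ↔ 0 < n ∧ α <:+ B (u (n - 1)) := by
  have hα : 0 < α.length := List.length_pos_iff.2 h0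
  constructor
  · rintro ⟨i, h1, h2⟩
    cases n with
    | zero => simp [pos] at h1; omega
    | succ n =>
      refine ⟨by omega, ?_⟩
      simp only [Nat.add_sub_cancel]
      have e := pos_succ (u := u) (B := B) n
      have hi : pos u B n < i := by
        by_contra hlt
        apply hm
        rw [← h2, mem_sl]
        exact ⟨pos u B n, by omega, by omega, (I n).1⟩
      refine ⟨sl w (pos u B n + 1) (i - (pos u B n + 1)), ?_⟩
      rw [← (I n).2, sl_split w (s := pos u B n + 1) (n := (B (u n)).length)
        (a := i - (pos u B n + 1)) (b := α.length) (by omega),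
        show pos u B n + 1 + (i - (pos u B n + 1)) = i by omega, h2]
  · rintro ⟨hn, β, hβ⟩
    obtain ⟨n, rfl⟩ : ∃ k, n = k + 1 := ⟨n - 1, by omega⟩
    simp only [Nat.add_sub_cancel] at hβ
    have h := (I n).2
    rw [← hβ] at h
    have h' := (sl_append_eq.1 h).2
    refine ⟨_, ?_, h'⟩
    rw [pos_succ, ← hβ]; simp; omega

theorem rc_pos (C : Code m B) (I : IsIm w u m B) {α : List A} (hm : m ∉ α)
    (n : ℕ) (h : Rc w α (pos u B n + 1)) : α <:+ B (u n) := by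
  unfold Rc at h
  have e := pos_succ (u := u) (B := B) n
  have hle : α.length ≤ (B (u n)).length := by
    by_contra hlt
    apply hm
    rw [← List.mem_reverse, ← h, mem_sl]
    exact ⟨pos u B (n + 1), by omega, by simp; omega, (I (n + 1)).1⟩
  have h2 := (I n).2
  rw [sl_split w (a := α.length) (b := (B (u n)).length - α.length) (by omega)] at h2
  rw [List.length_reverse] at h
  rw [h] at h2
  have h3 := congrArg List.reverse h2
  rw [C.pal] at h3
  rw [← h3]
  simp

/-- contexts given by letter sets -/
def LK (u : ℕ → ℕ) (K : ℕ → Prop) : ℕ → Prop := fun n => 0 < n ∧ K (u (n - 1))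
def RK (u : ℕ → ℕ) (K : ℕ → Prop) : ℕ → Prop := fun n => K (u n)

/-- Full step for palindromes containing the marker. -/
theorem ret_marker (C : Code m B) (I : IsIm w u m B) (x : List A) (hx : Pal x) (hm : m ∈ x)
    (H0 : ∀ y, x = fm m B y ++ [m] → Pal y → Ret u Top Top y)
    (H1 : ∀ α y, α ≠ [] → m ∉ α → x = α ++ (fm m B y ++ [m]) ++ α.reverse → Pal y →
      Ret u (LK u fun i => α <:+ B i) (RK u fun i => α <:+ B i) y) :
    Ret w Top Top x := by
  obtain ⟨α, z, hxe, hα, hz⟩ := pal_decomp m hx hm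
  by_cases h0 : α = []
  · subst h0
    simp only [List.nil_append, List.reverse_nil, List.append_nil] at hxe
    rw [hxe]
    exact ret_step2 C I _ _ _ hz fun y hy hp => H0 y (hxe.trans hy) hp
  · rw [hxe]
    refine ret_step1 _ _ (ret_step2 C I _ _ _ hz fun y hy hp => ?_)
    refine (H1 α y h0 hα (by rw [hxe, hy]) hp).mono (fun n => ?_) (fun n hn => ?_)
    · exact lc_pos_iff I h0 hα n
    · exact rc_pos C I hα n hn

/-- returns to letter sets -/
def TK (u : ℕ → ℕ) (K : ℕ → Prop) : Prop :=
  ∀ s t, s < t → K (u s) → K (u t) → ∃ r, s ≤ r ∧ r < t ∧ K (u r) ∧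
    Pal (sl u (r + 1) (t - (r + 1)))

theorem in_block (I : IsIm w u m B) {p : List A} (h0 : p ≠ []) (hm : m ∉ p) {s : ℕ}
    (hs : sl w s p.length = p) : ∃ n, pos u B n < s ∧ s + p.length ≤ pos u B (n + 1) := by
  have hp : 0 < p.length := List.length_pos_iff.2 h0
  obtain ⟨n, h1, h2⟩ := exists_block_s4 u B s
  have hno : ∀ k, s ≤ pos u B k → ¬ pos u B k < s + p.length := fun k hk hk2 =>
    hm (by rw [← hs, mem_sl]; exact ⟨_, hk, hk2, (I k).1⟩)
  have := hno n
  have := hno (n + 1)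
  exact ⟨n, by omega, by omega⟩

theorem sl_block (I : IsIm w u m B) {n k s l : ℕ} {c : A} (hB : B (u n) = List.replicate k c)
    (h1 : pos u B n < s) (h2 : s + l ≤ pos u B (n + 1)) : sl w s l = List.replicate l c := by
  rw [List.eq_replicate_iff]
  refine ⟨by simp, fun b hb => ?_⟩
  obtain ⟨j, hj1, hj2, rfl⟩ := mem_sl.1 hb
  have := mem_block I (n := n) (j := j) (by omega) (by omega)
  rw [hB] at this
  exact List.eq_of_mem_replicate this

/-- Full step for marker-free palindromes. -/
theorem ret_free (C : Code m B) (I : IsIm w u m B) (p : List A) (h0 : p ≠ []) (hm : m ∉ p)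
    (hT : TK u fun i => p <:+ B i) : Ret w Top Top p := by
  intro s t hst hs _ _ ht _ _
  have hp : 0 < p.length := List.length_pos_iff.2 h0
  obtain ⟨n, hn1, hn2⟩ := in_block I h0 hm hs
  obtain ⟨n', hn1', hn2'⟩ := in_block I h0 hm ht
  obtain ⟨k, c, hB⟩ := C.const (u n)
  obtain ⟨k', c', hB'⟩ := C.const (u n')
  by_cases htt : t = pos u B n' + 1
  · have hnn : n < n' := by
      by_contra hle
      have := (pos_strictMono (u := u) (B := B)).monotone (show n' ≤ n by omega)
      omega
    have hpc : p = List.replicate p.length c := by rw [← sl_block I hB hn1 hn2, hs]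
    have hpc' : p = List.replicate p.length c' := by rw [← sl_block I hB' hn1' hn2', ht]
    have hsuf : ∀ n k c, B (u n) = List.replicate k c → p = List.replicate p.length c →
        p.length + pos u B n + 1 ≤ pos u B (n + 1) → p <:+ B (u n) := by
      intro n k c hB hpc hle
      rw [pos_succ, hB, List.length_replicate] at hle
      rw [hB, hpc]
      refine ⟨List.replicate (k - p.length) c, ?_⟩
      rw [List.replicate_append_replicate]
      congr 1; omega
    obtain ⟨r, h1, h2, h3, h4⟩ := hT n n' hnn (hsuf n k c hB hpc (by omega))
      (hsuf n' k' c' hB' hpc' (by omega))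
    obtain ⟨-, h3⟩ : _ ∧ Lc w p (pos u B (r + 1)) :=
      ⟨trivial, (lc_pos_iff I h0 hm (r + 1)).2 ⟨by omega, by simpa using h3⟩⟩
    obtain ⟨i, hi, hi2⟩ := h3
    have hmono := (pos_strictMono (u := u) (B := B)).monotone (show n + 1 ≤ r + 1 by omega)
    have hmono' := (pos_strictMono (u := u) (B := B)).monotone (show r + 1 ≤ n' by omega)
    refine ⟨i, by omega, by omega, trivial, ?_⟩
    have e : sl w i (t + p.length - i)
        = p ++ (fm m B (sl u (r + 1) (n' - (r + 1))) ++ [m]) ++ p := by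
      rw [← sl_pos_m I, show r + 1 + (n' - (r + 1)) = n' by omega,
        sl_split w (a := p.length + (pos u B n' + 1 - pos u B (r + 1))) (b := p.length)
          (by omega), sl_add, hi2, ← hi,
        show i + (p.length + (pos u B n' + 1 - pos u B (r + 1))) = t by omega, ht]
    have hpp : p.reverse = p := by
      rw [hpc]; simp
    have h5 := fm_pal C h4
    unfold Pal at *
    rw [e, List.reverse_append, List.reverse_append, h5, hpp]
    simp
  · refine ⟨t - 1, by omega, by omega, trivial, ?_⟩
    rw [sl_block I hB' (s := t - 1) (by omega) (by omega)]
    simp [Pal]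

theorem ret_nil (w : ℕ → A) : Ret w Top Top [] := by
  intro s t hst _ _ _ _ _ _
  refine ⟨t - 1, by omega, by omega, trivial, ?_⟩
  rw [show t + ([] : List A).length - (t - 1) = 1 by simp; omega, sl_one]
  rfl

/-- Build `IsIm` from prefix occurrence. -/
theorem isIm_of (h : ∀ n, sl w 0 (fm m B (sl u 0 n)).length = fm m B (sl u 0 n)) :
    IsIm w u m B := by
  have hl : ∀ n, (fm m B (sl u 0 n)).length = pos u B n := by
    intro n
    induction n with
    | zero => rfl
    | succ n ih =>
      rw [sl_add, fm_append, List.length_append, ih, sl_one, fm_cons, fm_nil, pos_succ]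
      simp; omega
  intro n
  have h1 := h (n + 1)
  rw [sl_add, fm_append] at h1
  have h2 := (sl_append_eq.1 h1).2
  rw [hl, sl_one, fm_cons, fm_nil, List.append_nil] at h2
  simp only [Nat.zero_add] at h2
  exact sl_cons_eq.1 h2

end

/-- blocks of `φ_d`, with `D = d - 1` -/
def Bp (D i : ℕ) : List ℕ := if i = D then [D, D] else [i + 1]

theorem code_Bp {D : ℕ} (hD : 2 ≤ D) : Code 0 (Bp D) where
  inj i j h := by
    unfold Bp at h
    split_ifs at h with h1 h2 h2 <;> simp_all
  nm i h := by
    unfold Bp at h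
    split_ifs at h with h1 <;> simp at h
    omega
  const i := by
    unfold Bp
    split_ifs with h1
    · exact ⟨2, D, rfl⟩
    · exact ⟨1, i + 1, rfl⟩

/-- classification of left contexts -/
theorem classify {D : ℕ} (hD : 2 ≤ D) (α : List ℕ) (h0 : α ≠ []) (hm : 0 ∉ α) :
    (∀ i ≤ D, ¬ α <:+ Bp D i) ∨ (∃ c, α = [c + 1] ∧ ∀ i ≤ D, (α <:+ Bp D i ↔ i = c)) ∨
      (∃ k, 1 ≤ k ∧ k ≤ D ∧ ∀ i ≤ D, (α <:+ Bp D i ↔ k ≤ i)) := by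
  match α, h0, hm with
  | [0], _, hm => simp at hm
  | [a + 1], _, _ =>
    by_cases ha : a + 1 = D
    · right; right
      refine ⟨a, by omega, by omega, fun i hi => ?_⟩
      unfold Bp
      split_ifs with h
      · subst h
        simp [ha, List.suffix_cons_iff]; omega
      · simp [List.suffix_cons_iff]; omega
    · by_cases ha' : a = D
      · left
        intro i hi
        unfold Bp
        split_ifs with h
        · simp [ha', List.suffix_cons_iff]
        · simp [List.suffix_cons_iff]; omega
      · right; left
        refine ⟨a, rfl, fun i hi => ?_⟩
        unfold Bp
        split_ifs with h
        · simp [List.suffix_cons_iff]; omega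
        · simp [List.suffix_cons_iff]; omega
  | [a, b], _, _ =>
    by_cases hab : a = D ∧ b = D
    · right; right
      refine ⟨D, by omega, le_rfl, fun i hi => ?_⟩
      unfold Bp
      split_ifs with h
      · simp [hab, h]
      · simp [List.suffix_cons_iff]; omega
    · left
      intro i hi
      unfold Bp
      split_ifs with h
      · simp [List.suffix_cons_iff]; omega
      · simp [List.suffix_cons_iff]
  | a :: b :: c :: l, _, _ =>
    left
    intro i hi h
    have := h.length_le
    unfold Bp at this
    split_ifs at this <;> simp at this

section
variable {D : ℕ} {u : ℕ → ℕ}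

theorem TK_congr {K K' : ℕ → Prop} (hb : ∀ n, u n ≤ D) (h : ∀ i ≤ D, (K i ↔ K' i)) (H : TK u K') :
    TK u K := by
  intro s t hst hs ht
  obtain ⟨r, h1, h2, h3, h4⟩ := H s t hst ((h _ (hb _)).1 hs) ((h _ (hb _)).1 ht)
  exact ⟨r, h1, h2, (h _ (hb _)).2 h3, h4⟩

theorem RetK_congr {K K' : ℕ → Prop} {y : List ℕ} (hb : ∀ n, u n ≤ D)
    (h : ∀ i ≤ D, (K i ↔ K' i)) (H : Ret u (LK u K') (RK u K') y) :
    Ret u (LK u K) (RK u K) y := by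
  refine H.mono (fun n => ?_) (fun n hn => ?_)
  · simp only [LK, h _ (hb _)]
  · exact (h _ (hb _)).1 hn

theorem block_first (I : IsIm u u 0 (Bp D)) (n : ℕ) :
    u (pos u (Bp D) n + 1) = if u n = D then D else u n + 1 := by
  have h := (I n).2
  unfold Bp at h ⊢
  split_ifs at h ⊢ with hD
  · simp [sl_succ] at h
    exact h.1
  · simpa [sl_succ] using h

theorem block_last (I : IsIm u u 0 (Bp D)) (n : ℕ) :
    u (pos u (Bp D) (n + 1) - 1) = if u n = D then D else u n + 1 := by
  have h := (I n).2
  rw [pos_succ]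
  unfold Bp at h ⊢
  split_ifs at h ⊢ with hD
  · simp [sl_succ] at h
    simpa using h.2
  · simpa [sl_succ] using h

/-- two adjacent nonzero letters -/
theorem adj_nonzero (I : IsIm u u 0 (Bp D)) (j : ℕ) (h1 : u j ≠ 0) (h2 : u (j + 1) ≠ 0) :
    u j = D ∧ u (j + 1) = D := by
  obtain ⟨n, ha, hb⟩ := exists_block_s4 u (Bp D) j
  have hj : pos u (Bp D) n ≠ j := fun h => h1 (h ▸ (I n).1)
  have hj2 : pos u (Bp D) (n + 1) ≠ j + 1 := fun h => h2 (h ▸ (I (n + 1)).1)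
  have e := pos_succ (u := u) (B := Bp D) n
  by_cases hD : u n = D
  · have m1 := mem_block I (n := n) (j := j) (by omega) (by omega)
    have m2 := mem_block I (n := n) (j := j + 1) (by omega) (by omega)
    simp [Bp, hD] at m1 m2
    exact ⟨m1, m2⟩
  · simp [Bp, hD] at e
    omega

theorem TK_ge (hD : 2 ≤ D) (I : IsIm u u 0 (Bp D)) (k : ℕ) (hk : k ≤ D) :
    TK u fun i => k ≤ i := by
  induction k with
  | zero =>
    intro s t hst _ _
    exact ⟨t - 1, by omega, by omega, by omega, by
      rw [show t - (t - 1 + 1) = 0 by omega]; rfl⟩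
  | succ k ih =>
    have ih := ih (by omega)
    intro s t hst hs ht
    by_cases h0 : u (t - 1) = 0
    · obtain ⟨n', hn'⟩ := eq_pos (code_Bp hD) I h0
      have ht' : t = pos u (Bp D) n' + 1 := by omega
      obtain ⟨n, h1, h2⟩ := exists_block_s4 u (Bp D) s
      have h3 : pos u (Bp D) n ≠ s := fun h => by
        have := (I n).1; rw [h] at this; omega
      have hnn : n < n' := by
        by_contra hle
        have := (pos_strictMono (u := u) (B := Bp D)).monotone (show n' ≤ n by omega)
        omega
      have hkn : k ≤ u n := by
        have := mem_block I (n := n) (j := s) (by omega) (by omega)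
        unfold Bp at this
        split_ifs at this with h <;> simp at this <;> omega
      have hkn' : k ≤ u n' := by
        have := block_first I n'
        rw [← ht'] at this
        split_ifs at this <;> omega
      obtain ⟨r, g1, g2, g3, g4⟩ := ih n n' hnn hkn hkn'
      have hmono := (pos_strictMono (u := u) (B := Bp D)).monotone (show n + 1 ≤ r + 1 by omega)
      have hmono' := (pos_strictMono (u := u) (B := Bp D)).monotone (show r + 1 ≤ n' by omega)
      refine ⟨pos u (Bp D) (r + 1) - 1, by omega, by omega, ?_, ?_⟩
      · rw [block_last I]
        split_ifs <;> omega
      · have := fm_pal (code_Bp hD) g4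
        rw [← sl_pos_m I, show r + 1 + (n' - (r + 1)) = n' by omega, ← ht'] at this
        rwa [show pos u (Bp D) (r + 1) - 1 + 1 = pos u (Bp D) (r + 1) by omega]
    · refine ⟨t - 1, by omega, by omega, ?_, by
        rw [show t - (t - 1 + 1) = 0 by omega]; rfl⟩
      have := adj_nonzero I (t - 1) h0 (by rw [show t - 1 + 1 = t by omega]; omega)
      omega

theorem TK_single {c : ℕ} (H : Ret u Top Top [c]) : TK u fun i => i = c := by
  intro s t hst hs ht
  obtain ⟨r, h1, h2, -, h4⟩ := H s t hst (by simp [sl_one, hs]) trivial trivial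
    (by simp [sl_one, ht]) trivial trivial
  simp only [List.length_singleton] at h4
  have e : sl u r (t + 1 - r) = u r :: (sl u (r + 1) (t - (r + 1)) ++ [c]) := by
    rw [show t + 1 - r = (t - (r + 1) + 1) + 1 by omega, sl_succ, sl_add, sl_one,
      show r + 1 + (t - (r + 1)) = t by omega, ht]
  unfold Pal at h4
  rw [e] at h4
  simp only [List.reverse_cons, List.reverse_append, List.reverse_nil, List.nil_append,
    List.cons_append, List.cons.injEq] at h4
  refine ⟨r, h1, h2, h4.1.symm, ?_⟩
  have h5 := h4.2
  rw [← h4.1] at h5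
  exact List.append_cancel_right h5

theorem TK_ctx (hD : 2 ≤ D) (I : IsIm u u 0 (Bp D)) (hb : ∀ n, u n ≤ D) (α : List ℕ)
    (h0 : α ≠ []) (hm : 0 ∉ α) (H : ∀ c, α = [c + 1] → TK u fun i => i = c) :
    TK u fun i => α <:+ Bp D i := by
  rcases classify hD α h0 hm with h | ⟨c, hc, h⟩ | ⟨k, hk1, hk, h⟩
  · intro s t _ hs
    exact absurd hs (h _ (hb _))
  · exact TK_congr hb h (H c hc)
  · exact TK_congr hb h (TK_ge hD I k hk)

theorem ret_single (hD : 2 ≤ D) (I : IsIm u u 0 (Bp D)) (hb : ∀ n, u n ≤ D) (c : ℕ) :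
    Ret u Top Top [c] := by
  induction c with
  | zero =>
    refine ret_step2 (code_Bp hD) I _ _ [] rfl fun y hy _ => ?_
    have : y = [] := by
      have h1 := congrArg List.length hy
      have h2 := fm_len (m := 0) (B := Bp D) y
      simp at h1
      cases y with
      | nil => rfl
      | cons a y => simp [fm_cons] at h1
    subst this
    exact ret_nil u
  | succ c ih =>
    refine ret_free (code_Bp hD) I _ (by simp) (by simp) ?_
    refine TK_ctx hD I hb _ (by simp) (by simp) fun c' hc' => ?_
    simp only [List.cons.injEq, Nat.add_right_cancel_iff, and_true] at hc'
    subst hc'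
    exact TK_single ih

theorem ret_free_u (hD : 2 ≤ D) (I : IsIm u u 0 (Bp D)) (hb : ∀ n, u n ≤ D) (p : List ℕ)
    (hm : 0 ∉ p) : Ret u Top Top p := by
  by_cases h0 : p = []
  · subst h0; exact ret_nil u
  exact ret_free (code_Bp hD) I _ h0 hm
    (TK_ctx hD I hb _ h0 hm fun c _ => TK_single (ret_single hD I hb c))

/-- From `c x c` to `x` in context `c`. -/
theorem ret_strip {c : ℕ} {x : List ℕ} (H : Ret u Top Top (c :: (x ++ [c]))) :
    Ret u (LK u fun i => i = c) (RK u fun i => i = c) x := by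
  intro s t hst hs Ls Rs ht Lt Rt
  obtain ⟨s, rfl⟩ : ∃ k, s = k + 1 := ⟨s - 1, by have := Ls.1; omega⟩
  obtain ⟨t, rfl⟩ : ∃ k, t = k + 1 := ⟨t - 1, by omega⟩
  have key : ∀ s, sl u (s + 1) x.length = x → LK u (fun i => i = c) (s + 1) →
      RK u (fun i => i = c) (s + 1 + x.length) →
      sl u s (c :: (x ++ [c])).length = c :: (x ++ [c]) := by
    intro s h1 h2 h3
    refine sl_cons_eq.2 ⟨h2.2, sl_append_eq.2 ⟨h1, ?_⟩⟩
    simpa [sl_one, RK] using h3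
  obtain ⟨r, h1, h2, -, h4⟩ := H s t (by omega) (key s hs Ls Rs) trivial trivial
    (key t ht Lt Rt) trivial trivial
  have e : sl u r (t + (c :: (x ++ [c])).length - r)
      = u r :: (sl u (r + 1) (t + 1 + x.length - (r + 1)) ++ [c]) := by
    rw [show t + (c :: (x ++ [c])).length - r = (t + 1 + x.length - (r + 1) + 1) + 1 by
      simp; omega, sl_succ, sl_add, sl_one,
      show r + 1 + (t + 1 + x.length - (r + 1)) = t + 1 + x.length by omega]
    rw [show u (t + 1 + x.length) = c from Rt]
  unfold Pal at h4
  rw [e] at h4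
  simp only [List.reverse_cons, List.reverse_append, List.reverse_nil, List.nil_append,
    List.cons_append, List.cons.injEq] at h4
  refine ⟨r + 1, by omega, by omega, ⟨by omega, h4.1.symm⟩, ?_⟩
  have h5 := h4.2
  rw [← h4.1] at h5
  exact List.append_cancel_right h5

theorem ret_A_step (hD : 2 ≤ D) (I : IsIm u u 0 (Bp D)) (hb : ∀ n, u n ≤ D) (x : List ℕ)
    (hx : Pal x)
    (H0 : ∀ y, x = fm 0 (Bp D) y ++ [0] → Pal y → Ret u Top Top y)
    (H1 : ∀ c y, x = [c + 1] ++ (fm 0 (Bp D) y ++ [0]) ++ [c + 1] → Pal y →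
      Ret u Top Top (c :: (y ++ [c])))
    (H2 : ∀ α y, α ≠ [] → 0 ∉ α → x = α ++ (fm 0 (Bp D) y ++ [0]) ++ α.reverse → Pal y →
      ∀ k ≤ D, Ret u (LK u fun i => k ≤ i) (RK u fun i => k ≤ i) y) :
    Ret u Top Top x := by
  by_cases hm : 0 ∈ x
  · refine ret_marker (code_Bp hD) I x hx hm H0 fun α y h0 hα hxe hy => ?_
    rcases classify hD α h0 hα with h | ⟨c, hc, h⟩ | ⟨k, hk1, hk, h⟩
    · intro s t _ _ hs
      exact absurd hs.2 (h _ (hb _))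
    · refine RetK_congr hb h (ret_strip (H1 c y ?_ hy))
      rw [hxe, hc]; simp
    · exact RetK_congr hb h (H2 α y h0 hα hxe hy k hk)
  · exact ret_free_u hD I hb x hm

theorem fm_len2 (y : List ℕ) : 2 * y.length ≤ (fm 0 (Bp D) y).length := by
  induction y with
  | nil => simp
  | cons i y ih =>
    rw [fm_cons]
    have : 1 ≤ (Bp D i).length := by unfold Bp; split_ifs <;> simp
    simp; omega

theorem ret_main (hD : 2 ≤ D) (I : IsIm u u 0 (Bp D)) (hb : ∀ n, u n ≤ D) (N : ℕ) :
    ∀ x : List ℕ, x.length = N → Pal x → Ret u Top Top x ∧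
      ∀ k ≤ D, Ret u (LK u fun i => k ≤ i) (RK u fun i => k ≤ i) x := by
  induction N using Nat.strong_induction_on with
  | _ N ih =>
  intro x hN hx
  have ih' : ∀ y : List ℕ, y.length < x.length → Pal y → Ret u Top Top y ∧
      ∀ k ≤ D, Ret u (LK u fun i => k ≤ i) (RK u fun i => k ≤ i) y :=
    fun y hy => ih y.length (by omega) y rfl
  have hA : Ret u Top Top x := by
    refine ret_A_step hD I hb x hx ?_ ?_ ?_
    · intro y hxe hy
      have := congrArg List.length hxe
      have := fm_len2 (D := D) y
      simp at *
      exact (ih' y (by omega) hy).1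
    · intro c y hxe hy
      have := congrArg List.length hxe
      have := fm_len2 (D := D) y
      refine (ih' _ (by simp at *; omega) ?_).1
      unfold Pal at *
      simp [hy]
    · intro α y _ _ hxe hy
      have := congrArg List.length hxe
      have := fm_len2 (D := D) y
      simp at *
      exact (ih' y (by omega) hy).2
  refine ⟨hA, fun k hk => ?_⟩
  by_cases hk0 : k = 0
  · subst hk0
    intro s t hst hs Ls _ ht _ _
    obtain ⟨r, h1, h2, -, h4⟩ := hA s t hst hs trivial trivial ht trivial trivial
    exact ⟨r, h1, h2, ⟨by have := Ls.1; omega, by omega⟩, h4⟩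
  by_cases hx0 : ∃ z, x = 0 :: z
  · obtain ⟨z, rfl⟩ := hx0
    refine ret_step2 (code_Bp hD) I _ _ z hx fun y hy hp => ?_
    have hlt : y.length < (0 :: z).length := by
      have := congrArg List.length hy
      have := fm_len2 (D := D) y
      simp at *
      omega
    refine ((ih' y hlt hp).2 (k - 1) (by omega)).mono (fun n => ?_) (fun n hn => ?_)
    · cases n with
      | zero => simp [LK, pos]
      | succ n =>
        simp only [LK]
        rw [block_last I, pos_succ]
        have := hb n
        simp only [Nat.add_sub_cancel]
        split_ifs <;> omega
    · simp only [RK] at hn ⊢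
      rw [block_first I] at hn
      have := hb n
      split_ifs at hn <;> omega
  · -- here the contexts force the letter `D` on both sides
    have hDx : Ret u Top Top (D :: (x ++ [D])) := by
      refine ret_A_step hD I hb _ (by unfold Pal at *; simp [hx]) ?_ ?_ ?_
      · intro y hxe _
        obtain ⟨z, hz⟩ := fm_head 0 (Bp D) y
        rw [hz] at hxe
        simp at hxe
        omega
      · intro c y hxe _
        exfalso
        obtain ⟨z, hz⟩ := fm_head 0 (Bp D) y
        rw [hz] at hxe
        cases x with
        | nil =>
          have := congrArg List.length hxe
          simp at this
        | cons a x =>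
          simp at hxe
          exact hx0 ⟨x, by rw [hxe.2.1]⟩
      · intro α y h0 hα hxe hy
        have h1 := congrArg List.length hxe
        have h2 := fm_len2 (D := D) y
        have h3 : 0 < α.length := List.length_pos_iff.2 h0
        simp at h1
        exact (ih' y (by omega) hy).2
    have hstrip := ret_strip hDx
    have ends : ∀ s, sl u s x.length = x → LK u (fun i => k ≤ i) s →
        RK u (fun i => k ≤ i) (s + x.length) →
        LK u (fun i => i = D) s ∧ RK u (fun i => i = D) (s + x.length) := by
      intro s h1 h2 h3
      obtain ⟨s, rfl⟩ : ∃ j, s = j + 1 := ⟨s - 1, by have := h2.1; omega⟩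
      have hl : k ≤ u s := h2.2
      simp only [RK] at h3 ⊢
      simp only [LK, Nat.add_sub_cancel]
      cases x with
      | nil =>
        simp only [List.length_nil, Nat.add_zero] at h3 ⊢
        have := adj_nonzero I s (by omega) (by omega)
        exact ⟨⟨by omega, this.1⟩, this.2⟩
      | cons a z =>
        have ha : a ≠ 0 := fun h => hx0 ⟨z, by rw [h]⟩
        have g1 := (sl_cons_eq.1 h1).1
        have e := hx
        unfold Pal at e
        rw [List.reverse_cons] at e
        rw [← e] at h1
        have g2 := (sl_append_eq.1 h1).2
        simp only [List.length_reverse, List.length_singleton, sl_one, List.cons.injEq,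
          and_true] at g2
        have a1 := adj_nonzero I s (by omega) (by omega)
        have a2 := adj_nonzero I (s + 1 + z.length) (by omega) (by
          rw [List.length_cons] at h3
          rw [show s + 1 + z.length + 1 = s + 1 + (z.length + 1) by omega]; omega)
        refine ⟨⟨by omega, a1.1⟩, ?_⟩
        rw [List.length_cons]
        exact a2.2
    intro s t hst hs Ls Rs ht Lt Rt
    obtain ⟨es1, es2⟩ := ends s hs Ls Rs
    obtain ⟨et1, et2⟩ := ends t ht Lt Rt
    obtain ⟨r, h1, h2, h3, h4⟩ := hstrip s t hst hs es1 es2 ht et1 et2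
    exact ⟨r, h1, h2, ⟨h3.1, by rw [h3.2]; exact hk⟩, h4⟩

theorem code_pi : Code false (fun i => List.replicate i true) where
  inj i j h := by simpa using congrArg List.length h
  nm i h := by simp at h
  const i := ⟨i, true, rfl⟩

theorem ret_v (hD : 2 ≤ D) (I : IsIm u u 0 (Bp D)) (hb : ∀ n, u n ≤ D) {v : ℕ → Bool}
    (J : IsIm v u false (fun i => List.replicate i true)) (p : List Bool) (hp : Pal p) :
    Ret v Top Top p := by
  have hrep : ∀ α : List Bool, false ∉ α → α = List.replicate α.length true := by
    intro α h
    rw [List.eq_replicate_iff]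
    refine ⟨rfl, fun b hb => ?_⟩
    cases b
    · exact absurd hb h
    · rfl
  have hctx : ∀ α : List Bool, false ∉ α → ∀ i, (α <:+ List.replicate i true ↔ α.length ≤ i) := by
    intro α h i
    constructor
    · intro h; simpa using h.length_le
    · intro hle
      rw [hrep α h]
      refine ⟨List.replicate (i - α.length) true, ?_⟩
      rw [List.replicate_append_replicate]
      congr 1; omega
  by_cases hm : false ∈ p
  · refine ret_marker code_pi J p hp hm (fun y _ hy => (ret_main hD I hb _ y rfl hy).1)
      fun α y h0 hα hxe hy => ?_
    by_cases hle : α.length ≤ D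
    · exact RetK_congr hb (fun i _ => hctx α hα i) ((ret_main hD I hb _ y rfl hy).2 _ hle)
    · intro s t _ _ hs
      have h1 := (hctx α hα _).1 hs.2
      have h2 := hb (s - 1)
      omega
  · by_cases h0 : p = []
    · subst h0; exact ret_nil v
    refine ret_free code_pi J p h0 hm ?_
    by_cases hle : p.length ≤ D
    · exact TK_congr hb (fun i _ => hctx p hm i) (TK_ge hD I _ hle)
    · intro s t _ hs
      have h1 := (hctx p hm _).1 hs
      have h2 := hb s
      omega

end

theorem phi_bound {d : ℕ} (hd : 3 ≤ d) {u : ℕ → ℕ} (hu : IsPhiFixed d u) (n : ℕ) :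
    u n ≤ d - 1 := by
  have h := (occursAt_iff _ _ _).1 (hu.2 (n + 1))
  have hlen : ∀ l : List ℕ, l.length ≤ (phiW d l).length := by
    intro l
    induction l with
    | nil => simp
    | cons a l ih =>
      have : phiW d (a :: l) = phiL d a ++ phiW d l := by simp [phiW]
      rw [this]
      have : 1 ≤ (phiL d a).length := by unfold phiL; split_ifs <;> simp
      simp; omega
  have h1 := hlen ((List.range (n + 1)).map u)
  simp only [List.length_map, List.length_range] at h1
  have hmem : u n ∈ phiW d ((List.range (n + 1)).map u) := by
    rw [← h, mem_sl]
    exact ⟨n, by omega, by omega, rfl⟩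
  obtain ⟨a, -, ha⟩ := List.mem_flatMap.1 hmem
  unfold phiL at ha
  split_ifs at ha <;> simp at ha <;> omega

theorem phi_isIm {d : ℕ} (hd : 3 ≤ d) {u : ℕ → ℕ} (hu : IsPhiFixed d u) :
    IsIm u u 0 (Bp (d - 1)) := by
  refine isIm_of fun n => ?_
  have h := (occursAt_iff _ _ _).1 (hu.2 n)
  have e : phiW d ((List.range n).map u) = fm 0 (Bp (d - 1)) (sl u 0 n) := by
    rw [sl_eq_range]
    simp only [Nat.zero_add]
    unfold phiW fm
    rw [List.flatMap_map, List.flatMap_map]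
    congr 1
    funext i
    have := phi_bound hd hu i
    unfold phiL Bp
    split_ifs <;> first | rfl | omega
  rwa [e] at h

/-- For `d ≥ 3`, the binary sequence `π(u_d)` (image of the fixed point
`u_d` of `φ_d` under `π : i ↦ a bⁱ`) is rich. -/
theorem statement4 (d : ℕ) (hd : 3 ≤ d) (u : ℕ → ℕ) (hu : IsPhiFixed d u)
    (v : ℕ → Bool) (hv : ∀ m : ℕ, OccursAt (((List.range m).map u).flatMap piL) v 0) :
    RichSeq v := by
  have hb := phi_bound hd hu
  have I := phi_isIm hd hu
  have J : IsIm v u false (fun i => List.replicate i true) := by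
    refine isIm_of fun n => ?_
    have h := (occursAt_iff _ _ _).1 (hv n)
    have e : ((List.range n).map u).flatMap piL
        = fm false (fun i => List.replicate i true) (sl u 0 n) := by
      rw [sl_eq_range]
      simp only [Nat.zero_add]
      rfl
    rwa [e] at h
  rintro w ⟨j, hj⟩
  have h1 := (occursAt_iff _ _ _).1 hj
  unfold RichWord
  have h2 := rich_of_ret v (fun p hp => ret_v (by omega) I hb J p hp) j w.length
  rwa [h1] at h2
end RichRT
end
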